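/- There exist absolute constants c > 0 and C > 0 such that the following holds for all sufficiently large N. Let ν > 0 and let A ⊆ [N] be a set with no non-zero square differences, of density α = |A|/N ≥ N^{-1/3}. Then at least one of the following holds: (1) log(1/α) ≥ c·log N; (2) there exists an integer N' ≥ c·ν·α^C·N and a set A' ⊆ [N'] with no non-zero square differences and density at least (1 + ν/20)·α; (3) there exist reals B, Q ≤ C·α^{−C} and a set 𝓑 ⊆ Q_{≤Q} such that both: (a) for each a/q ∈ 𝓑 there exists γ_{a/q} ∈ (0,1] with ‖γ_{a/q} − a/q‖ ≤ C·α^{−C}/N and Σ_{a/q ∈ 𝓑} |1̂_A(γ_{a/q})| ≥ c·B·|A|·Q^{1/2}/(log(1/α))^C, and (b) for every 1 ≤ q ≤ Q, |𝓑 ∩ Q_{=q}| ≤ ν·B². -/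

import Mathlib

open MeasureTheory

/-- `A` has no non-zero square differences. -/
def NoSquareDiff (A : Finset ℕ) : Prop :=
  ∀ a ∈ A, ∀ b ∈ A, ∀ n : ℕ, 0 < n → a ≠ b + n ^ 2

/-- `e(x) = e^{2πix}`. -/
noncomputable def eu (x : ℝ) : ℂ := Complex.exp (2 * Real.pi * Complex.I * x)

/-- The Fourier transform of the indicator of `A`: `1̂_A(γ) = ∑_{a ∈ A} e(aγ)`. -/
noncomputable def hatInd (A : Finset ℕ) (γ : ℝ) : ℂ := ∑ a ∈ A, eu (a * γ)

/-! ### The exponential `eu` -/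

lemma eu_eq (x : ℝ) : eu x = Complex.exp (Complex.I * ((2 * Real.pi * x : ℝ) : ℂ)) := by
  rw [eu]; push_cast; ring_nf

@[simp] lemma eu_zero : eu 0 = 1 := by simp [eu]

lemma eu_add (x y : ℝ) : eu (x + y) = eu x * eu y := by
  rw [eu, eu, eu, ← Complex.exp_add]; push_cast; ring_nf

@[simp] lemma norm_eu (x : ℝ) : ‖eu x‖ = 1 := by
  rw [eu_eq, mul_comm, Complex.norm_exp_ofReal_mul_I]

@[simp] lemma eu_intCast (k : ℤ) : eu k = 1 := by
  rw [eu, Complex.exp_eq_one_iff]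
  exact ⟨k, by push_cast; ring⟩

lemma eu_add_intCast (x : ℝ) (k : ℤ) : eu (x + k) = eu x := by
  rw [eu_add, eu_intCast, mul_one]

lemma eu_eq_of_sub_eq {x y : ℝ} (k : ℤ) (h : x - y = k) : eu x = eu y := by
  rw [← eu_add_intCast y k, ← h]; ring_nf

lemma conj_eu (x : ℝ) : (starRingEnd ℂ) (eu x) = eu (-x) := by
  rw [eu, eu, ← Complex.exp_conj]
  simp [Complex.conj_ofReal, map_ofNat]

lemma eu_natCast_mul (n : ℕ) (x : ℝ) : eu (n * x) = eu x ^ n := by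
  rw [eu, eu, ← Complex.exp_nat_mul]; push_cast; ring_nf

lemma norm_eu_sub_one_le (x : ℝ) : ‖eu x - 1‖ ≤ 2 * Real.pi * |x| := by
  rw [eu_eq]
  refine Real.norm_exp_I_mul_ofReal_sub_one_le.trans (le_of_eq ?_)
  rw [Real.norm_eq_abs, abs_mul, abs_of_pos Real.two_pi_pos]

lemma norm_eu_sub_eu_le (x y : ℝ) : ‖eu x - eu y‖ ≤ 2 * Real.pi * |x - y| := by
  have : eu x - eu y = eu y * (eu (x - y) - 1) := by
    rw [mul_sub, ← eu_add]; ring_nf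
  rw [this, norm_mul, norm_eu, one_mul]
  exact norm_eu_sub_one_le _

lemma le_norm_eu_sub_one {x : ℝ} (hx : |x| ≤ 1 / 2) : 4 * |x| ≤ ‖eu x - 1‖ := by
  rw [eu_eq, Complex.norm_exp_I_mul_ofReal_sub_one, Real.norm_eq_abs, abs_mul, abs_two]
  have h := Real.mul_le_sin (x := Real.pi * |x|) (by positivity)
    (by nlinarith [Real.pi_pos])
  have e : 2 / Real.pi * (Real.pi * |x|) = 2 * |x| := by field_simp
  have h2 : Real.sin (Real.pi * |x|) ≤ |Real.sin (2 * Real.pi * x / 2)| := by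
    rcases abs_cases x with ⟨hx, _⟩ | ⟨hx, _⟩
    · rw [hx]; refine le_trans (le_of_eq ?_) (le_abs_self _); ring_nf
    · rw [hx]; refine le_trans (le_of_eq ?_) (neg_le_abs _)
      rw [← Real.sin_neg]; ring_nf
  linarith

/-- Geometric sums of `eu` are bounded by the reciprocal of the distance to an integer. -/
lemma norm_sum_range_eu_le (n : ℕ) {x : ℝ} (m : ℤ) (h0 : x ≠ m) (h : |x - m| ≤ 1 / 2) :
    ‖∑ u ∈ Finset.range n, eu (u * x)‖ ≤ 1 / (2 * |x - m|) := by
  have hpos : 0 < |x - m| := abs_pos.2 (sub_ne_zero.2 h0)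
  have e : eu x = eu (x - m) := eu_eq_of_sub_eq m (by ring)
  have hlow := le_norm_eu_sub_one h
  rw [← e] at hlow
  have hne : eu x ≠ 1 := by
    intro h1; rw [h1, sub_self, norm_zero] at hlow; linarith
  simp_rw [eu_natCast_mul]
  rw [geom_sum_eq hne, norm_div, div_le_div_iff₀ (by linarith) (by linarith)]
  have : ‖eu x ^ n - 1‖ ≤ 2 := by
    refine (norm_sub_le _ _).trans ?_
    rw [norm_pow, norm_eu]; norm_num
  nlinarith

lemma norm_sum_range_eu_le_card (n : ℕ) (x : ℝ) :
    ‖∑ u ∈ Finset.range n, eu (u * x)‖ ≤ n := by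
  refine (norm_sum_le _ _).trans ?_
  simp

/-- Orthogonality of the characters of `ℤ / P`. -/
lemma sum_eu_div_mul {P : ℕ} (hP : 0 < P) (k : ℤ) :
    ∑ r ∈ Finset.range P, eu (((r : ℝ) + 1) / P * k) = if (P : ℤ) ∣ k then (P : ℂ) else 0 := by
  have hP' : (P : ℝ) ≠ 0 := by positivity
  split_ifs with h
  · obtain ⟨t, rfl⟩ := h
    have : ∀ r ∈ Finset.range P, eu (((r : ℝ) + 1) / P * ((P * t : ℤ) : ℝ)) = 1 := by
      intro r _
      rw [← eu_intCast ((r + 1) * t)]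
      congr 1; push_cast; field_simp
    rw [Finset.sum_congr rfl this]; simp
  · have hne : eu ((k : ℝ) / P) ≠ 1 := by
      rw [eu, Ne, Complex.exp_eq_one_iff]
      rintro ⟨n, hn⟩
      apply h
      have h2 : (2 * (Real.pi : ℂ) * Complex.I) ≠ 0 := Complex.two_pi_I_ne_zero
      rw [mul_comm (n : ℂ)] at hn
      have h3 := mul_left_cancel₀ h2 hn
      have h4 : (k : ℝ) / P = n := by exact_mod_cast h3
      refine ⟨n, ?_⟩
      rw [div_eq_iff hP'] at h4
      have : (k : ℝ) = ((P * n : ℤ) : ℝ) := by push_cast; linarith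
      exact_mod_cast this
    have : ∀ r ∈ Finset.range P, eu (((r : ℝ) + 1) / P * k) =
        eu ((k : ℝ) / P) * eu ((k : ℝ) / P) ^ r := by
      intro r _
      rw [← eu_natCast_mul, ← eu_add]; congr 1; ring
    rw [Finset.sum_congr rfl this, ← Finset.mul_sum, geom_sum_eq hne, ← eu_natCast_mul]
    have : (P : ℝ) * ((k : ℝ) / P) = k := by field_simp
    rw [this, eu_intCast]; simp

/-! ### Quadratic Gauss sums -/

lemma card_zmod_two_mul_eq_zero_le (q : ℕ) [NeZero q] :
    (Finset.univ.filter fun h : ZMod q => 2 * h = 0).card ≤ 2 := by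
  have hq : 0 < q := Nat.pos_of_ne_zero (NeZero.ne q)
  rw [← Finset.card_image_of_injective _ (ZMod.val_injective q)]
  refine (Finset.card_le_card (t := {0, q / 2}) ?_).trans Finset.card_le_two
  intro v hv
  simp only [Finset.mem_image, Finset.mem_filter, Finset.mem_univ, true_and] at hv
  obtain ⟨h, hh, rfl⟩ := hv
  have h1 : ((2 * h.val : ℕ) : ZMod q) = 0 := by
    push_cast; rw [ZMod.natCast_zmod_val]; exact hh
  rw [ZMod.natCast_eq_zero_iff] at h1
  obtain ⟨t, ht⟩ := h1
  have hlt := ZMod.val_lt h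
  have ht2 : t < 2 := by
    by_contra hcon
    have : q * 2 ≤ q * t := Nat.mul_le_mul_left _ (by omega)
    omega
  simp only [Finset.mem_insert, Finset.mem_singleton]
  interval_cases t <;> omega

lemma sum_range_eq_sum_zmod (q : ℕ) [NeZero q] (f : ZMod q → ℂ) :
    ∑ n ∈ Finset.range q, f n = ∑ n : ZMod q, f n := by
  refine Finset.sum_bij' (fun n _ => (n : ZMod q)) (fun z _ => z.val) ?_ ?_ ?_ ?_ ?_
  · simp
  · intro z _; simpa using ZMod.val_lt z
  · intro n hn; exact ZMod.val_cast_of_lt (by simpa using hn)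
  · intro z _; simp
  · simp

lemma norm_gauss_sum_sq_le {q : ℕ} (hq : 0 < q) {a : ℤ} (ha : IsCoprime a (q : ℤ)) :
    ‖∑ n ∈ Finset.range q, eu ((n : ℝ) ^ 2 * (a / q))‖ ^ 2 ≤ 2 * q := by
  have : NeZero q := ⟨hq.ne'⟩
  set ψ : AddChar (ZMod q) ℂ := ZMod.stdAddChar
  have hψ : ∀ z, ‖ψ z‖ = 1 := fun z => AddChar.norm_apply ψ z
  have e1 : ∑ n ∈ Finset.range q, eu ((n : ℝ) ^ 2 * (a / q)) =
      ∑ n : ZMod q, ψ (a * n ^ 2) := by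
    rw [← sum_range_eq_sum_zmod]
    refine Finset.sum_congr rfl fun n _ => ?_
    have : ((a : ZMod q) * (n : ZMod q) ^ 2) = ((a * n ^ 2 : ℤ) : ZMod q) := by push_cast; rfl
    rw [this, ZMod.stdAddChar_coe, eu]
    push_cast; ring_nf
  have hu : IsUnit ((a : ZMod q)) := by
    obtain ⟨u, v, huv⟩ := ha
    refine IsUnit.of_mul_eq_one (u : ZMod q) ?_
    have := congrArg (Int.cast : ℤ → ZMod q) huv
    push_cast at this
    rw [ZMod.natCast_self, mul_zero, add_zero] at this
    rw [mul_comm]; exact this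
  rw [e1]
  have e2 : ((‖∑ n : ZMod q, ψ (a * n ^ 2)‖ ^ 2 : ℝ) : ℂ) =
      ∑ h : ZMod q, ψ (a * h ^ 2) * (if 2 * h = 0 then (q : ℂ) else 0) := by
    push_cast
    rw [← Complex.mul_conj', map_sum, Finset.sum_mul_sum, Finset.sum_comm]
    have : ∀ n : ZMod q, ∑ m : ZMod q, ψ (a * m ^ 2) * (starRingEnd ℂ) (ψ (a * n ^ 2)) =
        ∑ h : ZMod q, ψ (a * h ^ 2) * ψ (n * (a * (2 * h))) := by
      intro n
      rw [← Equiv.sum_comp (Equiv.addRight n)]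
      refine Finset.sum_congr rfl fun h _ => ?_
      rw [← AddChar.map_neg_eq_conj, ← AddChar.map_add_eq_mul, ← AddChar.map_add_eq_mul]
      congr 1
      simp only [Equiv.coe_addRight]; ring
    rw [Finset.sum_congr rfl fun n _ => this n, Finset.sum_comm]
    refine Finset.sum_congr rfl fun h _ => ?_
    rw [← Finset.mul_sum, AddChar.sum_mulShift _ (ZMod.isPrimitive_stdAddChar q)]
    simp only [hu.mul_right_eq_zero, ZMod.card]
    push_cast; rfl
  have e3 : ‖∑ n : ZMod q, ψ (a * n ^ 2)‖ ^ 2 =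
      ‖∑ h : ZMod q, ψ (a * h ^ 2) * (if 2 * h = 0 then (q : ℂ) else 0)‖ := by
    rw [← e2, Complex.norm_real, Real.norm_of_nonneg (by positivity)]
  rw [e3]
  refine (norm_sum_le _ _).trans ?_
  have : ∀ h : ZMod q, ‖ψ (a * h ^ 2) * (if 2 * h = 0 then (q : ℂ) else 0)‖ =
      if 2 * h = 0 then (q : ℝ) else 0 := by
    intro h
    rw [norm_mul, hψ, one_mul]; split_ifs <;> simp
  rw [Finset.sum_congr rfl fun h _ => this h, ← Finset.sum_filter, Finset.sum_const, nsmul_eq_mul]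
  gcongr
  exact_mod_cast card_zmod_two_mul_eq_zero_le q

/-! ### The weighted quadratic exponential sum near rationals -/

/-- The exponential sum `∑_{n ≤ M} 2n e(n²γ)` over weighted squares. -/
noncomputable def sqSum (M : ℕ) (γ : ℝ) : ℂ :=
  ∑ n ∈ Finset.range (M + 1), (2 * n : ℂ) * eu ((n : ℝ) ^ 2 * γ)

lemma norm_sum_mul_le_of_partial_sums (φ g : ℕ → ℂ) {G : ℝ} (n : ℕ)
    (hG : ∀ m ≤ n + 1, ‖∑ i ∈ Finset.range m, g i‖ ≤ G) :
    ‖∑ i ∈ Finset.range (n + 1), φ i * g i‖ ≤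
      G * (‖φ n‖ + ∑ i ∈ Finset.range n, ‖φ (i + 1) - φ i‖) := by
  have h := Finset.sum_range_by_parts φ g (n + 1)
  simp only [smul_eq_mul, Nat.add_sub_cancel] at h
  rw [h, mul_add]
  refine (norm_sub_le _ _).trans (add_le_add ?_ ?_)
  · rw [norm_mul, mul_comm]
    exact mul_le_mul_of_nonneg_right (hG _ le_rfl) (norm_nonneg _)
  · rw [Finset.mul_sum]
    refine (norm_sum_le _ _).trans (Finset.sum_le_sum fun i hi => ?_)
    rw [norm_mul, mul_comm]
    exact mul_le_mul_of_nonneg_right (hG _ (by grind)) (norm_nonneg _)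

lemma norm_sum_range_le_of_periodic {q : ℕ} (hq : 0 < q) {g : ℕ → ℂ} {b : ℝ} (hb : 0 ≤ b)
    (hper : ∀ n, g (q + n) = g n) (hsum : ∑ i ∈ Finset.range q, g i = 0) (hg : ∀ n, ‖g n‖ ≤ b)
    (m : ℕ) : ‖∑ i ∈ Finset.range m, g i‖ ≤ b * q := by
  induction m using Nat.strong_induction_on with
  | _ m ih =>
    by_cases hm : m < q
    · calc ‖∑ i ∈ Finset.range m, g i‖ ≤ ∑ i ∈ Finset.range m, b :=
            norm_sum_le_of_le _ fun i _ => hg i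
        _ = m * b := by simp
        _ ≤ b * q := by
            have : (m : ℝ) ≤ q := by exact_mod_cast hm.le
            nlinarith
    · obtain ⟨m', rfl⟩ := Nat.exists_eq_add_of_le (not_lt.1 hm)
      rw [Finset.sum_range_add, hsum, zero_add, Finset.sum_congr rfl fun i _ => hper i]
      exact ih m' (by omega)

lemma norm_sqSum_sub_sum_range_le (M : ℕ) (β : ℝ) :
    ‖sqSum M β - ∑ u ∈ Finset.range (M * (M + 1)), eu (u * β)‖ ≤
      4 * Real.pi * M ^ 3 * |β| := by
  induction M with
  | zero => simp [sqSum]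
  | succ M ih =>
    have e : (M + 1) * (M + 1 + 1) = M * (M + 1) + 2 * (M + 1) := by ring
    have e2 : ((2 * (M + 1 : ℕ) : ℂ)) * eu (((M + 1 : ℕ) : ℝ) ^ 2 * β) =
        ∑ _j ∈ Finset.range (2 * (M + 1)), eu (((M + 1 : ℕ) : ℝ) ^ 2 * β) := by
      rw [Finset.sum_const, Finset.card_range, nsmul_eq_mul]; push_cast; ring
    have e3 : sqSum (M + 1) β - ∑ u ∈ Finset.range ((M + 1) * (M + 1 + 1)), eu (u * β) =
        (sqSum M β - ∑ u ∈ Finset.range (M * (M + 1)), eu (u * β)) +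
        ∑ j ∈ Finset.range (2 * (M + 1)), (eu (((M + 1 : ℕ) : ℝ) ^ 2 * β) -
          eu (((M * (M + 1) + j : ℕ) : ℝ) * β)) := by
      rw [e, Finset.sum_range_add, Finset.sum_sub_distrib, ← e2, sqSum, Finset.sum_range_succ,
        ← sqSum]
      ring
    rw [e3]
    refine (norm_add_le _ _).trans ?_
    have h2 : ‖∑ j ∈ Finset.range (2 * (M + 1)), (eu (((M + 1 : ℕ) : ℝ) ^ 2 * β) -
          eu (((M * (M + 1) + j : ℕ) : ℝ) * β))‖ ≤
        ∑ j ∈ Finset.range (2 * (M + 1)), 2 * Real.pi * ((M + 1) * |β|) := by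
      refine norm_sum_le_of_le _ fun j hj => (norm_eu_sub_eu_le _ _).trans ?_
      rw [Finset.mem_range] at hj
      have hj' : (j : ℝ) ≤ 2 * (M + 1) := by exact_mod_cast hj.le
      have : ((M + 1 : ℕ) : ℝ) ^ 2 * β - ((M * (M + 1) + j : ℕ) : ℝ) * β =
          ((M : ℝ) + 1 - j) * β := by push_cast; ring
      rw [this, abs_mul]
      have hpi := Real.two_pi_pos
      gcongr
      rw [abs_le]
      constructor <;> linarith [show (0 : ℝ) ≤ j from Nat.cast_nonneg j]
    rw [Finset.sum_const, Finset.card_range, nsmul_eq_mul] at h2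
    push_cast at h2 ⊢
    have h3 : 4 * Real.pi * M ^ 3 * |β| + 2 * (M + 1) * (2 * Real.pi * ((M + 1) * |β|)) ≤
        4 * Real.pi * (M + 1) ^ 3 * |β| := by
      have : (0 : ℝ) ≤ Real.pi * |β| := by positivity
      have hM : (0 : ℝ) ≤ M := Nat.cast_nonneg M
      nlinarith [mul_nonneg this hM, mul_nonneg this (sq_nonneg (M : ℝ))]
    linarith

/-- Major arc bound for `sqSum` at `a / q + β`. -/
lemma norm_sqSum_rat_add_le (M : ℕ) {q : ℕ} (hq : 0 < q) {a : ℤ} (ha : IsCoprime a (q : ℤ))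
    (β : ℝ) :
    ‖sqSum M (a / q + β)‖ ≤
      2 / √q * ‖∑ u ∈ Finset.range (M * (M + 1)), eu (u * β)‖ +
        100 * q * M * (1 + M ^ 2 * |β|) := by
  set G : ℂ := ∑ n ∈ Finset.range q, eu ((n : ℝ) ^ 2 * (a / q)) with hGdef
  have hqR : (0 : ℝ) < q := by exact_mod_cast hq
  have hq1 : (1 : ℝ) ≤ q := by exact_mod_cast hq
  have hG := norm_gauss_sum_sq_le hq ha
  rw [← hGdef] at hG
  have hGq : ‖G / q‖ ≤ 2 / √q := by
    rw [norm_div, Complex.norm_natCast, div_le_div_iff₀ hqR (by positivity)]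
    refine abs_le_of_sq_le_sq' ?_ (by positivity) |>.2
    rw [mul_pow, Real.sq_sqrt hqR.le]; nlinarith
  have hGq1 : ‖G / q‖ ≤ 1 := by
    rw [norm_div, Complex.norm_natCast, div_le_one hqR]
    refine (norm_sum_le _ _).trans ?_
    simp
  have hGq2 : ‖G / q‖ ≤ 2 := by linarith
  set g : ℕ → ℂ := fun n => eu ((n : ℝ) ^ 2 * (a / q)) - G / q with hg
  set φ : ℕ → ℂ := fun n => (2 * n : ℂ) * eu ((n : ℝ) ^ 2 * β) with hφ
  have e1 : sqSum M (a / q + β) = (∑ n ∈ Finset.range (M + 1), φ n * g n) +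
      G / q * sqSum M β := by
    rw [sqSum, sqSum, Finset.mul_sum, ← Finset.sum_add_distrib]
    refine Finset.sum_congr rfl fun n _ => ?_
    simp only [hg, hφ]
    rw [mul_add, eu_add]; ring
  have hpart : ∀ m, ‖∑ i ∈ Finset.range m, g i‖ ≤ 2 * q := by
    refine norm_sum_range_le_of_periodic hq (by norm_num) ?_ ?_ ?_
    · intro n
      simp only [hg]
      congr 1
      refine eu_eq_of_sub_eq (a * (q + 2 * n)) ?_
      push_cast; field_simp; ring
    · simp only [hg]
      rw [Finset.sum_sub_distrib, ← hGdef]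
      simp only [Finset.sum_const, Finset.card_range, nsmul_eq_mul]
      have : (q : ℂ) ≠ 0 := by exact_mod_cast hq.ne'
      field_simp; ring
    · intro n
      refine (norm_sub_le _ _).trans ?_
      rw [norm_eu]; linarith
  have hvar : ∀ n ∈ Finset.range M, ‖φ (n + 1) - φ n‖ ≤ 2 + 26 * M ^ 2 * |β| := by
    intro n hn
    have hn' : (n : ℝ) + 1 ≤ M := by exact_mod_cast Finset.mem_range.1 hn
    have hn0 : (0 : ℝ) ≤ n := Nat.cast_nonneg n
    have : φ (n + 1) - φ n = 2 * eu (((n + 1 : ℕ) : ℝ) ^ 2 * β) +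
        (2 * n : ℂ) * (eu (((n + 1 : ℕ) : ℝ) ^ 2 * β) - eu ((n : ℝ) ^ 2 * β)) := by
      simp only [hφ]; push_cast; ring
    rw [this]
    refine (norm_add_le _ _).trans (add_le_add ?_ ?_)
    · simp
    · rw [norm_mul]
      have h1 : ‖(2 * n : ℂ)‖ = 2 * n := by simp
      have h2 := norm_eu_sub_eu_le (((n + 1 : ℕ) : ℝ) ^ 2 * β) ((n : ℝ) ^ 2 * β)
      have h3 : ((n + 1 : ℕ) : ℝ) ^ 2 * β - (n : ℝ) ^ 2 * β = (2 * n + 1) * β := by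
        push_cast; ring
      rw [h3, abs_mul, abs_of_nonneg (by positivity : (0 : ℝ) ≤ 2 * n + 1)] at h2
      rw [h1]
      have hpi := Real.pi_lt_d2
      calc 2 * (n : ℝ) * _ ≤ 2 * n * (2 * Real.pi * ((2 * n + 1) * |β|)) := by gcongr
        _ = Real.pi * ((2 * n) * (2 * n + 1) * 2 * |β|) := by ring
        _ ≤ 3.15 * ((2 * M) * (2 * M) * 2 * |β|) := by
            have : (2 * n : ℝ) + 1 ≤ 2 * M := by linarith
            have : (2 * n : ℝ) ≤ 2 * M := by linarith
            gcongr
        _ ≤ 26 * M ^ 2 * |β| := by nlinarith [mul_nonneg (sq_nonneg (M : ℝ)) (abs_nonneg β)]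
  have h1 := norm_sum_mul_le_of_partial_sums φ g M fun m _ => hpart m
  have h2 : ‖φ M‖ = 2 * M := by simp [hφ]
  have h3 := Finset.sum_le_sum hvar
  rw [Finset.sum_const, Finset.card_range, nsmul_eq_mul] at h3
  have h4 := norm_sqSum_sub_sum_range_le M β
  set V : ℂ := ∑ u ∈ Finset.range (M * (M + 1)), eu (u * β)
  have h5 : ‖G / q * sqSum M β‖ ≤ 2 / √q * ‖V‖ + 4 * Real.pi * M ^ 3 * |β| := by
    have : G / q * sqSum M β = G / q * V + G / q * (sqSum M β - V) := by ring
    rw [this]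
    refine (norm_add_le _ _).trans ?_
    rw [norm_mul, norm_mul]
    refine add_le_add (mul_le_mul_of_nonneg_right hGq (norm_nonneg _)) ?_
    calc _ ≤ 1 * (4 * Real.pi * M ^ 3 * |β|) :=
          mul_le_mul hGq1 h4 (norm_nonneg _) zero_le_one
      _ = _ := one_mul _
  rw [e1]
  refine (norm_add_le _ _).trans ?_
  have h6 : 4 * Real.pi * (M : ℝ) ^ 3 * |β| ≤ 4 * 3.15 * q * M ^ 3 * |β| := by
    have hpi := Real.pi_lt_d2
    calc 4 * Real.pi * (M : ℝ) ^ 3 * |β| = 4 * Real.pi * 1 * (M : ℝ) ^ 3 * |β| := by ring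
      _ ≤ _ := by gcongr
  have h7 : 2 * (q : ℝ) * (‖φ M‖ + ∑ i ∈ Finset.range M, ‖φ (i + 1) - φ i‖) ≤
      2 * q * (2 * M + M * (2 + 26 * M ^ 2 * |β|)) := by
    rw [h2]; gcongr
  have h8 : 0 ≤ (q : ℝ) * M ^ 3 * |β| := by positivity
  have h9 : 0 ≤ (q : ℝ) * M := by positivity
  nlinarith

/-! ### Weyl's inequality -/

lemma norm_sum_range_sq_le_two_mul (a : ℕ → ℂ) (m : ℕ) :
    ‖∑ i ∈ Finset.range m, a i‖ ^ 2 ≤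
      2 * ∑ h ∈ Finset.range m,
        ‖∑ j ∈ Finset.range (m - h), a (h + j) * (starRingEnd ℂ) (a j)‖ := by
  have key : ∀ m : ℕ, ‖∑ i ∈ Finset.range m, a i‖ ^ 2 + ∑ i ∈ Finset.range m, ‖a i‖ ^ 2 =
      2 * (∑ i ∈ Finset.range m, ∑ k ∈ Finset.range (i + 1),
        a i * (starRingEnd ℂ) (a k)).re := by
    intro m
    induction m with
    | zero => simp
    | succ m ih =>
      rw [Finset.sum_range_succ, Finset.sum_range_succ (fun i => ‖a i‖ ^ 2),
        Finset.sum_range_succ (fun i => ∑ k ∈ Finset.range (i + 1), _), Complex.add_re, mul_add,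
        ← ih, Finset.sum_range_succ, ← Finset.mul_sum, ← map_sum]
      simp only [Complex.sq_norm, Complex.normSq_apply, Complex.add_re, Complex.add_im,
        Complex.mul_re, Complex.conj_re, Complex.conj_im]
      ring
  have e : ∑ i ∈ Finset.range m, ∑ k ∈ Finset.range (i + 1), a i * (starRingEnd ℂ) (a k) =
      ∑ h ∈ Finset.range m, ∑ j ∈ Finset.range (m - h), a (h + j) * (starRingEnd ℂ) (a j) := by
    rw [← Finset.sum_range_diag_flip m fun h j => a (h + j) * (starRingEnd ℂ) (a j)]
    refine Finset.sum_congr rfl fun i _ => ?_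
    rw [← Finset.sum_flip]
    refine Finset.sum_congr rfl fun k hk => ?_
    rw [Nat.add_sub_cancel' (by grind)]
  have h1 := key m
  rw [e] at h1
  have h2 : 0 ≤ ∑ i ∈ Finset.range m, ‖a i‖ ^ 2 := Finset.sum_nonneg fun _ _ => by positivity
  have h3 := (Complex.re_le_norm _).trans (norm_sum_le (Finset.range m)
    fun h => ∑ j ∈ Finset.range (m - h), a (h + j) * (starRingEnd ℂ) (a j))
  linarith

/-- If `γ` is within `q⁻²` of `a / q`, few multiples of `γ` are close to an integer. -/
lemma card_near_int_le {γ δ : ℝ} {q : ℕ} (hq : 0 < q) {a : ℤ} (ha : IsCoprime a (q : ℤ))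
    (hγ : |γ - a / q| ≤ 1 / (q : ℝ) ^ 2) (L : ℕ) (hδ : 0 ≤ δ) :
    (((Finset.range L).filter fun h : ℕ => |h * γ - round (h * γ)| ≤ δ).card : ℝ) ≤
      (2 * L / q + 1) * (4 * q * δ + 2) := by
  have hqR : (0 : ℝ) < q := by exact_mod_cast hq
  set b := (q + 1) / 2 with hb
  have hb0 : 0 < b := by omega
  set f : ℕ → ℕ × ℤ := fun h => (h / b, ⌊2 * q * (h * γ - round (h * γ))⌋) with hf
  set target := Finset.range (L / b + 1) ×ˢ Finset.Icc ⌊-(2 * q * δ)⌋ ⌊2 * q * δ⌋ with htarget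
  have hmaps : ∀ h ∈ (Finset.range L).filter fun h : ℕ => |h * γ - round (h * γ)| ≤ δ,
      f h ∈ target := by
    intro h hh
    rw [Finset.mem_filter, Finset.mem_range, abs_le] at hh
    rw [htarget, Finset.mem_product, Finset.mem_range, Finset.mem_Icc]
    refine ⟨Nat.lt_succ_of_le (Nat.div_le_div_right hh.1.le), Int.floor_le_floor ?_,
      Int.floor_le_floor ?_⟩
    · nlinarith [hh.2.1]
    · nlinarith [hh.2.2]
  have hinj : ∀ h h' : ℕ, h < h' → f h ≠ f h' := by
    intro h h' hlt heq
    simp only [hf, Prod.mk.injEq] at heq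
    obtain ⟨h1, h2⟩ := heq
    have hdiff : 2 * (h' - h) < q + 1 := by
      have e1 := Nat.div_add_mod h b
      have e2 := Nat.div_add_mod h' b
      have m2 := Nat.mod_lt h' hb0
      rw [h1] at e1
      omega
    have hfl := Int.abs_sub_lt_one_of_floor_eq_floor h2
    obtain ⟨j, rfl⟩ := Nat.exists_eq_add_of_lt hlt
    set m : ℤ := round (((h + j + 1 : ℕ) : ℝ) * γ) - round ((h : ℝ) * γ) with hm
    have hj1 : ((j + 1 : ℕ) : ℝ) ≤ q / 2 := by
      rw [le_div_iff₀ (by norm_num)]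
      have : (j + 1) * 2 ≤ q := by omega
      exact_mod_cast this
    have hj0 : (0 : ℝ) ≤ ((j + 1 : ℕ) : ℝ) := Nat.cast_nonneg _
    have h3 : |((j + 1 : ℕ) : ℝ) * γ - m| * (2 * q) < 1 := by
      have : 2 * q * ((h : ℝ) * γ - round ((h : ℝ) * γ)) -
          2 * q * (((h + j + 1 : ℕ) : ℝ) * γ - round (((h + j + 1 : ℕ) : ℝ) * γ)) =
          -(((((j + 1 : ℕ) : ℝ)) * γ - m) * (2 * q)) := by
        rw [hm]; push_cast; ring
      rw [this, abs_neg, abs_mul, abs_of_pos (by positivity : (0 : ℝ) < 2 * q)] at hfl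
      exact hfl
    have h4 : |(((j + 1 : ℕ) : ℤ) * a - m * q : ℤ)| < 1 := by
      have e : ((((j + 1 : ℕ) : ℤ) * a - m * q : ℤ) : ℝ) =
          (((j + 1 : ℕ) : ℝ) * γ - m) * q - ((j + 1 : ℕ) : ℝ) * q * (γ - a / q) := by
        push_cast; field_simp; ring
      have h5 : |((j + 1 : ℕ) : ℝ) * q * (γ - a / q)| ≤ 1 / 2 := by
        rw [abs_mul, abs_of_nonneg (by positivity)]
        calc ((j + 1 : ℕ) : ℝ) * q * |γ - a / q| ≤ (q / 2) * q * (1 / (q : ℝ) ^ 2) := by gcongr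
          _ = 1 / 2 := by field_simp
      have h6 : |(((j + 1 : ℕ) : ℝ) * γ - m) * q| < 1 / 2 := by
        rw [abs_mul, abs_of_pos hqR]; linarith
      have h7 : |((((j + 1 : ℕ) : ℤ) * a - m * q : ℤ) : ℝ)| < 1 := by
        rw [e]; exact (abs_sub _ _).trans_lt (by linarith)
      exact_mod_cast h7
    rw [Int.abs_lt_one_iff] at h4
    have hdvd : (q : ℤ) ∣ ((j + 1 : ℕ) : ℤ) * a := ⟨m, by linarith⟩
    have := ha.symm.dvd_of_dvd_mul_right hdvd
    have h8 := Nat.le_of_dvd (Nat.succ_pos j) (Int.natCast_dvd_natCast.1 this)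
    omega
  have hcard := Finset.card_le_card_of_injOn f hmaps (by
    intro h _ h' _ heq
    rcases lt_trichotomy h h' with hlt | hlt | hlt
    · exact absurd heq (hinj _ _ hlt)
    · exact hlt
    · exact absurd heq.symm (hinj _ _ hlt))
  rw [htarget, Finset.card_product, Finset.card_range, Int.card_Icc] at hcard
  have hcard' : (((Finset.range L).filter fun h : ℕ => |h * γ - round (h * γ)| ≤ δ).card : ℝ) ≤
      ((L / b + 1 : ℕ) : ℝ) * ((⌊2 * q * δ⌋ + 1 - ⌊-(2 * q * δ)⌋).toNat : ℝ) := by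
    exact_mod_cast hcard
  refine hcard'.trans ?_
  have hc1 : ((L / b + 1 : ℕ) : ℝ) ≤ 2 * L / q + 1 := by
    push_cast
    have h1 : ((L / b : ℕ) : ℝ) ≤ (L : ℝ) / b := Nat.cast_div_le
    have h2 : (q : ℝ) / 2 ≤ b := by
      have : q ≤ b * 2 := by omega
      rw [div_le_iff₀ (by norm_num)]
      exact_mod_cast this
    have h3 : (L : ℝ) / b ≤ L / (q / 2) := by gcongr
    have h4 : (L : ℝ) / (q / 2) = 2 * L / q := by field_simp
    linarith
  have hc2 : ((⌊2 * q * δ⌋ + 1 - ⌊-(2 * q * δ)⌋).toNat : ℝ) ≤ 4 * q * δ + 2 := by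
    have hnn : 0 ≤ ⌊2 * q * δ⌋ + 1 - ⌊-(2 * q * δ)⌋ := by
      have : ⌊-(2 * q * δ)⌋ ≤ ⌊2 * q * δ⌋ := by
        apply Int.floor_le_floor
        have : 0 ≤ 2 * q * δ := by positivity
        linarith
      omega
    have e : ((⌊2 * q * δ⌋ + 1 - ⌊-(2 * q * δ)⌋).toNat : ℝ) =
        ((⌊2 * q * δ⌋ + 1 - ⌊-(2 * q * δ)⌋ : ℤ) : ℝ) := by
      exact_mod_cast congrArg (Int.cast : ℤ → ℝ) (Int.toNat_of_nonneg hnn)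
    rw [e]; push_cast
    have h1 := Int.floor_le (2 * q * δ)
    have h2 := Int.lt_floor_add_one (-(2 * q * δ))
    linarith
  exact mul_le_mul hc1 hc2 (Nat.cast_nonneg _) (by positivity)

lemma norm_sum_range_sq_eu_le {γ δ : ℝ} {q : ℕ} (hq : 0 < q) {a : ℤ} (ha : IsCoprime a (q : ℤ))
    (hγ : |γ - a / q| ≤ 1 / (q : ℝ) ^ 2) (hδ : 0 < δ) {m L : ℕ} (hm : m ≤ L) :
    ‖∑ n ∈ Finset.range m, eu ((n : ℝ) ^ 2 * γ)‖ ^ 2 ≤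
      2 * L * ((4 * L / q + 1) * (4 * q * δ + 2)) + L / δ := by
  have hmL : (m : ℝ) ≤ L := by exact_mod_cast hm
  have h0 := norm_sum_range_sq_le_two_mul (fun n => eu ((n : ℝ) ^ 2 * γ)) m
  have h1 : ∀ h ∈ Finset.range m, ‖∑ j ∈ Finset.range (m - h), eu (((h + j : ℕ) : ℝ) ^ 2 * γ) *
      (starRingEnd ℂ) (eu ((j : ℝ) ^ 2 * γ))‖ ≤
      (if |(2 * h : ℕ) * γ - round ((2 * h : ℕ) * γ)| ≤ δ then (L : ℝ) else 0) +
        1 / (2 * δ) := by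
    intro h _
    have e : ∑ j ∈ Finset.range (m - h), eu (((h + j : ℕ) : ℝ) ^ 2 * γ) *
        (starRingEnd ℂ) (eu ((j : ℝ) ^ 2 * γ)) =
        eu ((h : ℝ) ^ 2 * γ) * ∑ j ∈ Finset.range (m - h), eu (j * ((2 * h : ℕ) * γ)) := by
      rw [Finset.mul_sum]
      refine Finset.sum_congr rfl fun j _ => ?_
      rw [conj_eu, ← eu_add, ← eu_add]; push_cast; ring_nf
    rw [e, norm_mul, norm_eu, one_mul]
    set x : ℝ := (2 * h : ℕ) * γ
    split_ifs with hx
    · have h2 := norm_sum_range_eu_le_card (m - h) x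
      have h3 : ((m - h : ℕ) : ℝ) ≤ m := by exact_mod_cast Nat.sub_le _ _
      have : 0 ≤ 1 / (2 * δ) := by positivity
      linarith
    · push Not at hx
      rw [zero_add]
      refine (norm_sum_range_eu_le _ (round x) ?_ (abs_sub_round x)).trans ?_
      · intro hcon
        rw [← hcon, sub_self, abs_zero] at hx
        linarith
      · gcongr
  have h2 := Finset.sum_le_sum h1
  rw [Finset.sum_add_distrib, ← Finset.sum_filter, Finset.sum_const, Finset.sum_const,
    Finset.card_range, nsmul_eq_mul, nsmul_eq_mul] at h2
  have h3 : (((Finset.range m).filter fun h : ℕ =>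
      |(2 * h : ℕ) * γ - round ((2 * h : ℕ) * γ)| ≤ δ).card : ℝ) ≤
      (4 * L / q + 1) * (4 * q * δ + 2) := by
    have hc := card_near_int_le hq ha hγ (2 * L) hδ.le
    have hle : ((Finset.range m).filter fun h : ℕ =>
        |(2 * h : ℕ) * γ - round ((2 * h : ℕ) * γ)| ≤ δ).card ≤
        ((Finset.range (2 * L)).filter fun h : ℕ => |h * γ - round (h * γ)| ≤ δ).card := by
      refine Finset.card_le_card_of_injOn (fun h => 2 * h) ?_ ?_
      · intro h hh
        simp only [Finset.coe_filter, Finset.mem_range, Set.mem_ofPred_eq] at hh ⊢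
        exact ⟨by omega, hh.2⟩
      · intro h _ h' _ heq
        simpa using heq
    refine (Nat.cast_le.2 hle).trans (hc.trans (le_of_eq ?_))
    push_cast; ring
  have h4 : (m : ℝ) * (1 / (2 * δ)) ≤ L / (2 * δ) := by
    rw [mul_one_div]; gcongr
  have h5 : (2 : ℝ) * (L / (2 * δ)) = L / δ := by field_simp
  have h6 := mul_le_mul_of_nonneg_right h3 (Nat.cast_nonneg L : (0 : ℝ) ≤ L)
  linarith

/-- Minor arc bound for `sqSum`. -/
lemma norm_sqSum_le_of_weyl {γ δ R : ℝ} {q : ℕ} (hq : 0 < q) {a : ℤ}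
    (ha : IsCoprime a (q : ℤ)) (hγ : |γ - a / q| ≤ 1 / (q : ℝ) ^ 2) (hδ : 0 < δ) (M : ℕ)
    (hR : 0 ≤ R) (hbound : 2 * ((M : ℝ) + 1) * ((4 * (M + 1) / q + 1) * (4 * q * δ + 2)) +
      (M + 1) / δ ≤ R ^ 2) :
    ‖sqSum M γ‖ ≤ 4 * M * R := by
  have h1 := norm_sum_mul_le_of_partial_sums (fun n => (2 * n : ℂ))
    (fun n => eu ((n : ℝ) ^ 2 * γ)) (G := R) M (by
      intro m hm
      refine abs_le_of_sq_le_sq' ?_ hR |>.2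
      have := norm_sum_range_sq_eu_le hq ha hγ hδ hm
      push_cast at this
      exact this.trans hbound)
  refine h1.trans (le_of_eq ?_)
  have : ∀ i ∈ Finset.range M, ‖(2 * ((i + 1 : ℕ) : ℂ)) - 2 * (i : ℂ)‖ = 2 := by
    intro i _
    have : (2 * ((i + 1 : ℕ) : ℂ)) - 2 * (i : ℂ) = 2 := by push_cast; ring
    rw [this]; simp
  rw [Finset.sum_congr rfl this]
  simp
  ring

/-! ### Summing over an arc -/

lemma card_floor_abs_sub_fiber_le (R : Finset ℕ) (y : ℝ) (t : ℕ) :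
    (R.filter fun r : ℕ => ⌊|(r : ℝ) - y|⌋₊ = t).card ≤ 2 := by
  rw [← Finset.card_image_of_injective _ (Nat.cast_injective (R := ℤ))]
  refine (Finset.card_le_card (t := {⌈y⌉ + t, ⌊y⌋ - t}) ?_).trans Finset.card_le_two
  intro z hz
  simp only [Finset.mem_image, Finset.mem_filter] at hz
  obtain ⟨r, ⟨-, hr⟩, rfl⟩ := hz
  rw [Nat.floor_eq_iff (abs_nonneg _)] at hr
  simp only [Finset.mem_insert, Finset.mem_singleton]
  rcases abs_cases ((r : ℝ) - y) with ⟨h, h0⟩ | ⟨h, h0⟩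
  · left
    rw [h] at hr
    have : ⌈y⌉ = (r : ℤ) - t := by
      rw [Int.ceil_eq_iff]; push_cast; constructor <;> linarith [hr.1, hr.2]
    omega
  · right
    rw [h] at hr
    have : ⌊y⌋ = (r : ℤ) + t := by
      rw [Int.floor_eq_iff]; push_cast; constructor <;> linarith [hr.1, hr.2]
    omega

lemma sum_le_two_mul_sum_floor (R : Finset ℕ) (y : ℝ) (H : ℕ) (hR : ∀ r ∈ R, |(r : ℝ) - y| ≤ H)
    (g : ℕ → ℝ) (G : ℕ → ℝ) (hG : ∀ t, 0 ≤ G t) (hg : ∀ r ∈ R, g r ≤ G ⌊|(r : ℝ) - y|⌋₊) :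
    ∑ r ∈ R, g r ≤ 2 * ∑ t ∈ Finset.range (H + 1), G t := by
  have hmaps : ∀ r ∈ R, ⌊|(r : ℝ) - y|⌋₊ ∈ Finset.range (H + 1) := by
    intro r hr
    rw [Finset.mem_range, Nat.lt_succ_iff]
    exact Nat.floor_le_of_le (hR r hr)
  rw [← Finset.sum_fiberwise_of_maps_to hmaps, Finset.mul_sum]
  refine Finset.sum_le_sum fun t _ => ?_
  calc ∑ r ∈ R.filter fun r : ℕ => ⌊|(r : ℝ) - y|⌋₊ = t, g r
      ≤ ∑ r ∈ R.filter fun r : ℕ => ⌊|(r : ℝ) - y|⌋₊ = t, G t := by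
        refine Finset.sum_le_sum fun r hr => ?_
        rw [Finset.mem_filter] at hr
        exact (hg r hr.1).trans (by rw [hr.2])
    _ = (R.filter fun r : ℕ => ⌊|(r : ℝ) - y|⌋₊ = t).card * G t := by
        rw [Finset.sum_const, nsmul_eq_mul]
    _ ≤ 2 * G t := by
        gcongr
        · exact hG t
        · exact_mod_cast card_floor_abs_sub_fiber_le R y t

lemma sum_le_of_le_inv_dist (R : Finset ℕ) (y : ℝ) (H : ℕ) (hR : ∀ r ∈ R, |(r : ℝ) - y| ≤ H)
    (g : ℕ → ℝ) {W P : ℝ} (hW : 0 ≤ W) (hP : 0 ≤ P) (hgW : ∀ r ∈ R, g r ≤ W)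
    (hgP : ∀ r ∈ R, 1 ≤ |(r : ℝ) - y| → g r ≤ P / (2 * |(r : ℝ) - y|)) :
    ∑ r ∈ R, g r ≤ 2 * W + P * (1 + Real.log H) := by
  have h := sum_le_two_mul_sum_floor R y H hR g (fun t => if t = 0 then W else P / (2 * t))
    (fun t => by split_ifs <;> positivity) (by
      intro r hr
      split_ifs with h0
      · exact hgW r hr
      · have h1 : 1 ≤ |(r : ℝ) - y| := by
          by_contra hlt
          exact h0 (Nat.floor_eq_zero.2 (not_le.1 hlt))
        refine (hgP r hr h1).trans ?_
        have h2 : (⌊|(r : ℝ) - y|⌋₊ : ℝ) ≤ |(r : ℝ) - y| := Nat.floor_le (abs_nonneg _)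
        have h3 : (0 : ℝ) < ⌊|(r : ℝ) - y|⌋₊ := by exact_mod_cast Nat.pos_of_ne_zero h0
        gcongr)
  refine h.trans ?_
  rw [Finset.sum_range_succ']
  have e : ∑ k ∈ Finset.range H, (if k + 1 = 0 then W else P / (2 * ((k + 1 : ℕ) : ℝ))) =
      P / 2 * (harmonic H : ℝ) := by
    rw [harmonic]; push_cast; rw [Finset.mul_sum]
    refine Finset.sum_congr rfl fun k _ => ?_
    field_simp
  rw [e, if_pos rfl]
  have := harmonic_le_one_add_log H
  nlinarith

/-- Sum of `sqSum` over the frequencies `(r + 1) / P` near a rational. -/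
lemma sum_norm_sqSum_arc_le (M P H : ℕ) (hP : 0 < P) (x : ℚ) {κ : ℝ} (hκ0 : 0 ≤ κ) (hκ : κ ≤ 1 / 2)
    (hH : κ * P ≤ H) :
    ∑ r ∈ (Finset.range P).filter fun r : ℕ => |((r : ℝ) + 1) / P - x| ≤ κ,
        ‖sqSum M (((r : ℝ) + 1) / P)‖ ≤
      2 / √x.den * (2 * (M * (M + 1)) + P * (1 + Real.log H)) +
        2 * (H + 1) * (100 * x.den * M * (1 + M ^ 2 * κ)) := by
  have hPR : (0 : ℝ) < P := by exact_mod_cast hP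
  set R := (Finset.range P).filter fun r : ℕ => |((r : ℝ) + 1) / P - x| ≤ κ with hRdef
  set V : ℕ → ℝ := fun r => ‖∑ u ∈ Finset.range (M * (M + 1)),
    eu (u * (((r : ℝ) + 1) / P - x))‖ with hV
  have hx : (x : ℝ) = (x.num : ℝ) / x.den := by exact_mod_cast (Rat.num_div_den x).symm
  have hS : ∀ r ∈ R, ‖sqSum M (((r : ℝ) + 1) / P)‖ ≤
      2 / √x.den * V r + 100 * x.den * M * (1 + M ^ 2 * κ) := by
    intro r hr
    have h1 := norm_sqSum_rat_add_le M x.pos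
      (Rat.isCoprime_num_den x) (((r : ℝ) + 1) / P - x)
    have e : (x.num : ℝ) / x.den + (((r : ℝ) + 1) / P - x) = ((r : ℝ) + 1) / P := by
      rw [hx]; ring
    rw [e] at h1
    refine h1.trans ?_
    have h2 := (Finset.mem_filter.1 hr).2
    gcongr
  set y : ℝ := x * P - 1
  have hdist : ∀ r : ℕ, |(r : ℝ) - y| = |((r : ℝ) + 1) / P - x| * P := by
    intro r
    rw [← abs_of_pos hPR, ← abs_mul, abs_of_pos hPR]
    congr 1
    simp only [y]; field_simp; ring
  have hRH : ∀ r ∈ R, |(r : ℝ) - y| ≤ H := by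
    intro r hr
    rw [hdist]
    have := (Finset.mem_filter.1 hr).2
    calc _ ≤ κ * P := by gcongr
      _ ≤ H := hH
  have hsum := Finset.sum_le_sum hS
  rw [Finset.sum_add_distrib, ← Finset.mul_sum, Finset.sum_const, nsmul_eq_mul] at hsum
  have hVsum : ∑ r ∈ R, V r ≤ 2 * (M * (M + 1)) + P * (1 + Real.log H) := by
    refine sum_le_of_le_inv_dist R y H hRH V (by positivity) hPR.le ?_ ?_
    · intro r _
      have := norm_sum_range_eu_le_card (M * (M + 1)) (((r : ℝ) + 1) / P - x)
      push_cast at this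
      exact this
    · intro r hr h1
      have hκ' := (Finset.mem_filter.1 hr).2
      have hne : |((r : ℝ) + 1) / P - x| ≠ 0 := by
        intro h0
        rw [hdist, h0, zero_mul] at h1
        linarith
      have := norm_sum_range_eu_le (M * (M + 1)) (x := ((r : ℝ) + 1) / P - x) 0
        (by simpa using hne) (by simpa using hκ'.trans hκ)
      refine this.trans (le_of_eq ?_)
      rw [hdist]; simp only [Int.cast_zero, sub_zero]; field_simp
  have hcard : (R.card : ℝ) ≤ 2 * (H + 1) := by
    have := sum_le_two_mul_sum_floor R y H hRH (fun _ => 1) (fun _ => 1) (by simp) (by simp)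
    simpa using this
  refine hsum.trans (add_le_add ?_ ?_)
  · gcongr
  · gcongr

/-! ### Consequences of the absence of a density increment -/

/-- Plancherel on `ℤ / P`, for sums over a set that may have collisions modulo `P`. -/
lemma sum_norm_sq_fourier_eq {P : ℕ} (hP : 0 < P) (s : Finset ℕ) (f : ℕ → ℝ) :
    ∑ r ∈ Finset.range P, ‖∑ y ∈ s, (f y : ℂ) * eu (y * (((r : ℝ) + 1) / P))‖ ^ 2 =
      P * ∑ y ∈ s, ∑ z ∈ s, if (P : ℤ) ∣ (y : ℤ) - z then f y * f z else 0 := by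
  apply Complex.ofReal_injective
  push_cast
  have h1 : ∀ r ∈ Finset.range P,
      (‖∑ y ∈ s, (f y : ℂ) * eu (y * (((r : ℝ) + 1) / P))‖ : ℂ) ^ 2 =
      ∑ y ∈ s, ∑ z ∈ s, (f y * f z : ℂ) * eu (((r : ℝ) + 1) / P * ((y - z : ℤ) : ℝ)) := by
    intro r _
    rw [← Complex.mul_conj', map_sum, Finset.sum_mul_sum]
    refine Finset.sum_congr rfl fun y _ => Finset.sum_congr rfl fun z _ => ?_
    rw [map_mul, Complex.conj_ofReal, conj_eu, mul_mul_mul_comm, ← eu_add]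
    congr 2; push_cast; ring
  rw [Finset.sum_congr rfl h1, Finset.sum_comm, Finset.mul_sum]
  refine Finset.sum_congr rfl fun y _ => ?_
  rw [Finset.sum_comm, Finset.mul_sum]
  refine Finset.sum_congr rfl fun z _ => ?_
  rw [← Finset.mul_sum, sum_eu_div_mul hP]
  split_ifs <;> push_cast <;> ring

/-- Every square-difference-free subset of `[n]` has at most `D` elements. -/
def SquareDiffBound (n : ℕ) (D : ℝ) : Prop :=
  ∀ A' : Finset ℕ, A' ⊆ Finset.Icc 1 n → NoSquareDiff A' → (A'.card : ℝ) ≤ D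

lemma NoSquareDiff.card_progression_le {A : Finset ℕ} (hA : NoSquareDiff A) {n : ℕ} {D : ℝ}
    (hD : SquareDiffBound n D) (s : ℕ) {q : ℕ} (hq : 0 < q) :
    (((Finset.range n).filter fun t => s + q ^ 2 * t ∈ A).card : ℝ) ≤ D := by
  rw [← Finset.card_image_of_injective _ (add_left_injective 1)]
  refine hD _ ?_ ?_
  · intro t ht
    simp only [Finset.mem_image, Finset.mem_filter, Finset.mem_range] at ht
    obtain ⟨u, ⟨hu, -⟩, rfl⟩ := ht
    rw [Finset.mem_Icc]; omega
  · intro a ha b hb m hm heq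
    simp only [Finset.mem_image, Finset.mem_filter, Finset.mem_range] at ha hb
    obtain ⟨u, ⟨-, hu⟩, rfl⟩ := ha
    obtain ⟨v, ⟨-, hv⟩, rfl⟩ := hb
    have huv : u = v + m ^ 2 := by omega
    refine hA _ hu _ hv (q * m) (Nat.mul_pos hq hm) ?_
    rw [huv]; ring

lemma NoSquareDiff.card_class_le {A : Finset ℕ} (hA : NoSquareDiff A) {n : ℕ}
    (hn : 0 < n) {D : ℝ} (hD : SquareDiffBound n D) {q : ℕ} (hq : 0 < q) (i b : ℕ) :
    ((A.filter fun x => x / (q ^ 2 * n) = i ∧ x % q = b).card : ℝ) ≤ q * D := by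
  set L := q ^ 2 * n with hL
  have hsub : (A.filter fun x => x / L = i ∧ x % q = b) ⊆
      (Finset.range q).biUnion fun j =>
        ((Finset.range n).filter fun t => i * L + b + q * j + q ^ 2 * t ∈ A).image
          fun t => i * L + b + q * j + q ^ 2 * t := by
    intro x hx
    obtain ⟨hxA, hxi, hxb⟩ := Finset.mem_filter.1 hx
    set u := x % L with hu
    have hxu : x = L * i + u := by rw [← hxi, hu, Nat.div_add_mod]
    have hub : u % q = b := by
      rw [← hxb, hxu, hL, pow_two, mul_assoc, mul_assoc, Nat.mul_add_mod]
    have hLpos : 0 < L := by positivity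
    have hu1 : u = q * (u / q) + b := by rw [← hub, Nat.div_add_mod]
    have hu2 : u / q = q * (u / q / q) + (u / q) % q := (Nat.div_add_mod _ _).symm
    have hxeq : x = i * L + b + q * (u / q % q) + q ^ 2 * (u / q / q) := by
      rw [hxu]
      nth_rw 1 [hu1, hu2]
      ring
    have hlt : u / q / q < n := by
      rw [Nat.div_div_eq_div_mul, Nat.div_lt_iff_lt_mul (by positivity)]
      calc u < L := Nat.mod_lt _ hLpos
        _ = n * (q * q) := by rw [hL]; ring
    simp only [Finset.mem_biUnion, Finset.mem_image, Finset.mem_filter, Finset.mem_range]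
    exact ⟨u / q % q, Nat.mod_lt _ hq, u / q / q, ⟨hlt, hxeq ▸ hxA⟩, hxeq.symm⟩
  have hcard := (Finset.card_le_card hsub).trans Finset.card_biUnion_le
  have : ((A.filter fun x => x / L = i ∧ x % q = b).card : ℝ) ≤
      ∑ j ∈ Finset.range q, (((Finset.range n).filter fun t =>
        i * L + b + q * j + q ^ 2 * t ∈ A).card : ℝ) := by
    refine (Nat.cast_le.2 hcard).trans ?_
    push_cast
    refine Finset.sum_le_sum fun j _ => ?_
    exact_mod_cast Finset.card_image_le
  refine this.trans ?_
  calc _ ≤ ∑ j ∈ Finset.range q, D :=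
        Finset.sum_le_sum fun j _ => hA.card_progression_le hD _ hq
    _ = q * D := by simp

lemma hatInd_one (B : Finset ℕ) : hatInd B 1 = B.card := by
  have : ∀ y ∈ B, eu ((y : ℝ) * 1) = 1 := fun y _ => by
    rw [mul_one]; exact_mod_cast eu_intCast (y : ℤ)
  rw [hatInd, Finset.sum_congr rfl this]; simp

lemma norm_hatInd_le (B : Finset ℕ) (γ : ℝ) : ‖hatInd B γ‖ ≤ B.card := by
  refine (norm_sum_le _ _).trans ?_
  simp

lemma sum_norm_sq_hatInd_le {q : ℕ} (hq : 0 < q) (B : Finset ℕ) {E : ℝ}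
    (hE : ∀ b, ((B.filter fun x => x % q = b).card : ℝ) ≤ E) :
    ∑ r ∈ Finset.range q, ‖hatInd B (((r : ℝ) + 1) / q)‖ ^ 2 ≤ q * (B.card * E) := by
  have h := sum_norm_sq_fourier_eq hq B fun _ => 1
  simp only [Complex.ofReal_one, one_mul] at h
  simp only [hatInd]
  rw [h]
  gcongr
  rw [← nsmul_eq_mul, ← Finset.sum_const]
  refine Finset.sum_le_sum fun y _ => ?_
  rw [← Finset.sum_filter, Finset.sum_const, nsmul_eq_mul, mul_one]
  refine le_trans (le_of_eq ?_) (hE (y % q))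
  congr 2
  refine Finset.filter_congr fun z _ => ?_
  rw [← Int.modEq_iff_dvd]
  exact Int.natCast_modEq_iff

lemma sum_norm_sq_hatInd_rat_le {q : ℕ} (hq : 0 < q) (S : Finset ℚ)
    (hS : ∀ x ∈ S, x.den = q ∧ 0 < x ∧ x < 1) (B : Finset ℕ) {E : ℝ}
    (hE : ∀ b, ((B.filter fun x => x % q = b).card : ℝ) ≤ E) :
    ∑ x ∈ S, ‖hatInd B x‖ ^ 2 ≤ q * (B.card * E) - (B.card : ℝ) ^ 2 := by
  have h := sum_norm_sq_hatInd_le hq B hE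
  obtain ⟨p, rfl⟩ : ∃ p, q = p + 1 := ⟨q - 1, by omega⟩
  rw [Finset.sum_range_succ] at h
  have hlast : ((p : ℝ) + 1) / ((p + 1 : ℕ) : ℝ) = 1 := by
    push_cast; exact div_self (by positivity)
  rw [hlast, hatInd_one, Complex.norm_natCast] at h
  have hnum : ∀ x ∈ S, 0 < x.num ∧ x.num < p + 1 := by
    intro x hx
    obtain ⟨h1, h2, h3⟩ := hS x hx
    refine ⟨Rat.num_pos.2 h2, ?_⟩
    have := Rat.num_lt_denom_iff.2 h3
    rw [h1] at this
    exact_mod_cast this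
  have hval : ∀ x ∈ S, (((x.num - 1).toNat : ℝ) + 1) / ((p + 1 : ℕ) : ℝ) = x := by
    intro x hx
    have h1 : (((x.num - 1).toNat : ℤ) : ℝ) = ((x.num - 1 : ℤ) : ℝ) := by
      rw [Int.toNat_of_nonneg (by have := (hnum x hx).1; omega)]
    rw [Int.cast_natCast] at h1
    rw [h1, ← (hS x hx).1]
    push_cast
    rw [sub_add_cancel]
    exact_mod_cast Rat.num_div_den x
  have hle : ∑ x ∈ S, ‖hatInd B x‖ ^ 2 ≤
      ∑ r ∈ Finset.range p, ‖hatInd B (((r : ℝ) + 1) / ((p + 1 : ℕ) : ℝ))‖ ^ 2 := by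
    have hinj : Set.InjOn (fun x : ℚ => (x.num - 1).toNat) S := by
      intro x hx y hy hxy
      have h1 := hval x hx
      have h2 := hval y hy
      simp only at hxy
      rw [hxy, h2] at h1
      exact_mod_cast h1.symm
    calc ∑ x ∈ S, ‖hatInd B x‖ ^ 2
        = ∑ x ∈ S, ‖hatInd B ((((x.num - 1).toNat : ℝ) + 1) / ((p + 1 : ℕ) : ℝ))‖ ^ 2 :=
          Finset.sum_congr rfl fun x hx => by rw [hval x hx]
      _ = ∑ r ∈ S.image fun x : ℚ => (x.num - 1).toNat,
            ‖hatInd B (((r : ℝ) + 1) / ((p + 1 : ℕ) : ℝ))‖ ^ 2 :=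
          (Finset.sum_image (f := fun r : ℕ =>
            ‖hatInd B (((r : ℝ) + 1) / ((p + 1 : ℕ) : ℝ))‖ ^ 2) hinj).symm
      _ ≤ _ := by
          refine Finset.sum_le_sum_of_subset_of_nonneg ?_ fun _ _ _ => by positivity
          intro r hr
          obtain ⟨x, hx, rfl⟩ := Finset.mem_image.1 hr
          have := hnum x hx
          rw [Finset.mem_range]; omega
  linarith

/-- Splitting into tiles of length `L`, a frequency may be perturbed at small cost. -/
lemma norm_hatInd_add_le (A : Finset ℕ) {L J : ℕ} (hL : 0 < L) (hJ : ∀ x ∈ A, x / L < J)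
    (x β : ℝ) :
    ‖hatInd A (x + β)‖ ≤ ∑ i ∈ Finset.range J, ‖hatInd (A.filter fun y => y / L = i) x‖ +
      2 * Real.pi * (L * |β|) * A.card := by
  have hmaps : ∀ y ∈ A, y / L ∈ Finset.range J := fun y hy => Finset.mem_range.2 (hJ y hy)
  have e : hatInd A (x + β) = ∑ i ∈ Finset.range J,
      eu ((i * L : ℕ) * β) * hatInd (A.filter fun y => y / L = i) x +
      ∑ y ∈ A, eu (y * x) * (eu (y * β) - eu ((y / L * L : ℕ) * β)) := by
    have h1 : ∑ i ∈ Finset.range J,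
        eu ((i * L : ℕ) * β) * hatInd (A.filter fun y => y / L = i) x =
        ∑ y ∈ A, eu ((y / L * L : ℕ) * β) * eu (y * x) := by
      rw [← Finset.sum_fiberwise_of_maps_to hmaps]
      refine Finset.sum_congr rfl fun i _ => ?_
      rw [hatInd, Finset.mul_sum]
      refine Finset.sum_congr rfl fun y hy => ?_
      rw [(Finset.mem_filter.1 hy).2]
    rw [h1, ← Finset.sum_add_distrib, hatInd]
    refine Finset.sum_congr rfl fun y _ => ?_
    rw [mul_add, eu_add]; ring
  rw [e]
  refine (norm_add_le _ _).trans (add_le_add ?_ ?_)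
  · refine norm_sum_le_of_le _ fun i _ => ?_
    rw [norm_mul, norm_eu, one_mul]
  · have : ∀ y ∈ A, ‖eu (y * x) * (eu (y * β) - eu ((y / L * L : ℕ) * β))‖ ≤
        2 * Real.pi * (L * |β|) := by
      intro y _
      rw [norm_mul, norm_eu, one_mul]
      refine (norm_eu_sub_eu_le _ _).trans ?_
      rw [← sub_mul, abs_mul]
      have hpi := Real.two_pi_pos
      gcongr
      have h1 : (y : ℝ) = ((y / L * L : ℕ) : ℝ) + ((y % L : ℕ) : ℝ) := by
        exact_mod_cast (Nat.div_add_mod' y L).symm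
      have h2 : ((y % L : ℕ) : ℝ) ≤ L := by exact_mod_cast (Nat.mod_lt y hL).le
      rw [h1, add_sub_cancel_left, abs_of_nonneg (Nat.cast_nonneg _)]
      exact h2
    refine (norm_sum_le_of_le _ this).trans (le_of_eq ?_)
    rw [Finset.sum_const, nsmul_eq_mul]; ring

/-- Without a density increment, the Fourier mass near the reduced fractions of denominator `q` is
small. -/
lemma NoSquareDiff.sum_norm_sq_hatInd_near_le {A : Finset ℕ} (hA : NoSquareDiff A) {n : ℕ}
    (hn : 0 < n) {D : ℝ} (hD : SquareDiffBound n D) {q J : ℕ} (hq : 0 < q)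
    (hJ : ∀ x ∈ A, x / (q ^ 2 * n) < J) (S : Finset ℚ)
    (hS : ∀ x ∈ S, x.den = q ∧ 0 < x ∧ x < 1) (γ : ℚ → ℝ) {κ : ℝ}
    (hγ : ∀ x ∈ S, |γ x - x| ≤ κ) :
    ∑ x ∈ S, ‖hatInd A (γ x)‖ ^ 2 ≤
      2 * (J * (q ^ 2 * D) * A.card - (A.card : ℝ) ^ 2) +
        2 * q * (2 * Real.pi * (q ^ 2 * n * κ) * A.card) ^ 2 := by
  set L := q ^ 2 * n with hL
  have hLpos : 0 < L := by positivity
  set B : ℕ → Finset ℕ := fun i => A.filter fun y => y / L = i with hB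
  have hmaps : ∀ y ∈ A, y / L ∈ Finset.range J := fun y hy => Finset.mem_range.2 (hJ y hy)
  have hcardA : (A.card : ℝ) = ∑ i ∈ Finset.range J, ((B i).card : ℝ) := by
    exact_mod_cast Finset.card_eq_sum_card_fiberwise hmaps
  have hBE : ∀ i b, (((B i).filter fun x => x % q = b).card : ℝ) ≤ q * D := by
    intro i b
    rw [hB, Finset.filter_filter]
    exact hA.card_class_le hn hD hq i b
  have hpoint : ∀ x ∈ S, ‖hatInd A (γ x)‖ ^ 2 ≤
      2 * (J * ∑ i ∈ Finset.range J, ‖hatInd (B i) x‖ ^ 2) +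
        2 * (2 * Real.pi * (L * κ) * A.card) ^ 2 := by
    intro x hx
    have h1 := norm_hatInd_add_le A hLpos hJ x (γ x - x)
    rw [add_sub_cancel] at h1
    have h2 : 2 * Real.pi * (L * |γ x - x|) * A.card ≤ 2 * Real.pi * (L * κ) * A.card := by
      have := hγ x hx
      have hpi := Real.two_pi_pos
      gcongr
    have h3 := sq_sum_le_card_mul_sum_sq (s := Finset.range J) (f := fun i => ‖hatInd (B i) x‖)
    rw [Finset.card_range] at h3
    set u := ∑ i ∈ Finset.range J, ‖hatInd (B i) x‖
    set v := 2 * Real.pi * (L * κ) * A.card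
    have h4 : ‖hatInd A (γ x)‖ ≤ u + v := h1.trans (by gcongr)
    have h5 : ‖hatInd A (γ x)‖ ^ 2 ≤ (u + v) ^ 2 := by gcongr
    nlinarith [sq_nonneg (u - v)]
  refine (Finset.sum_le_sum hpoint).trans ?_
  rw [Finset.sum_add_distrib, ← Finset.mul_sum, ← Finset.mul_sum, Finset.sum_comm,
    Finset.sum_const, nsmul_eq_mul]
  have hScard : (S.card : ℝ) ≤ q := by
    have hc : S.card ≤ (Finset.range q).card := by
      refine Finset.card_le_card_of_injOn (fun x => x.num.toNat) ?_ ?_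
      · intro x hx
        obtain ⟨h1, h2, h3⟩ := hS x hx
        have h4 := Rat.num_lt_denom_iff.2 h3
        have h5 := Rat.num_pos.2 h2
        simp only [Finset.coe_range, Set.mem_Iio]
        omega
      · intro x hx y hy hxy
        have h1 := Rat.num_pos.2 (hS x hx).2.1
        have h2 := Rat.num_pos.2 (hS y hy).2.1
        simp only at hxy
        exact Rat.ext (by omega) ((hS x hx).1.trans (hS y hy).1.symm)
    rw [Finset.card_range] at hc
    exact_mod_cast hc
  have hmain : (J : ℝ) * ∑ i ∈ Finset.range J, ∑ x ∈ S, ‖hatInd (B i) x‖ ^ 2 ≤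
      J * (q ^ 2 * D) * A.card - (A.card : ℝ) ^ 2 := by
    have h1 : ∑ i ∈ Finset.range J, ∑ x ∈ S, ‖hatInd (B i) x‖ ^ 2 ≤
        ∑ i ∈ Finset.range J, (q * ((B i).card * (q * D)) - ((B i).card : ℝ) ^ 2) :=
      Finset.sum_le_sum fun i _ => sum_norm_sq_hatInd_rat_le hq S hS (B i) (hBE i)
    have h2 : ∑ i ∈ Finset.range J, (q * ((B i).card * (q * D)) - ((B i).card : ℝ) ^ 2) =
        q ^ 2 * D * A.card - ∑ i ∈ Finset.range J, ((B i).card : ℝ) ^ 2 := by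
      rw [Finset.sum_sub_distrib, hcardA, Finset.mul_sum]
      congr 1
      exact Finset.sum_congr rfl fun i _ => by ring
    have h3 := sq_sum_le_card_mul_sum_sq (s := Finset.range J) (f := fun i => ((B i).card : ℝ))
    rw [Finset.card_range, ← hcardA] at h3
    rw [h2] at h1
    have h4 := mul_le_mul_of_nonneg_left h1 (Nat.cast_nonneg J : (0 : ℝ) ≤ J)
    linarith
  have hcast : ((L : ℕ) : ℝ) = q ^ 2 * n := by rw [hL]; push_cast; ring
  rw [hcast]
  have h6 := mul_le_mul_of_nonneg_right hScard
    (by positivity : 0 ≤ 2 * (2 * Real.pi * (q ^ 2 * n * κ) * A.card) ^ 2)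
  linarith

/-! ### The circle method with a balanced function -/

/-- The Fourier transform of `a * 1_{[0, T)} - 1_A`. -/
noncomputable def balHat (A : Finset ℕ) (a : ℝ) (T : ℕ) (γ : ℝ) : ℂ :=
  a * ∑ x ∈ Finset.range T, eu (x * γ) - hatInd A γ

open Classical in
lemma balHat_eq_sum {A : Finset ℕ} {T : ℕ} (hAT : A ⊆ Finset.range T) (a γ : ℝ) :
    balHat A a T γ =
      ∑ x ∈ Finset.range T, ((a - if x ∈ A then 1 else 0 : ℝ) : ℂ) * eu (x * γ) := by
  have h : hatInd A γ = ∑ x ∈ Finset.range T, if x ∈ A then eu (x * γ) else 0 := by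
    rw [← Finset.sum_filter, Finset.filter_mem_eq_inter, Finset.inter_eq_right.2 hAT, hatInd]
  rw [balHat, h, Finset.mul_sum, ← Finset.sum_sub_distrib]
  refine Finset.sum_congr rfl fun x _ => ?_
  split_ifs <;> push_cast <;> ring

lemma sum_two_mul_range (M : ℕ) : ∑ n ∈ Finset.range (M + 1), (2 * n : ℝ) = M * (M + 1) := by
  induction M with
  | zero => simp
  | succ k ih => rw [Finset.sum_range_succ, ih]; push_cast; ring

open Classical in
lemma sum_balHat_mul_eq {A : Finset ℕ} {T M : ℕ} (hT : 0 < T) (hAT : A ⊆ Finset.range T)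
    (hM : M ^ 2 ≤ T) (a : ℝ) :
    ∑ r ∈ Finset.range (2 * T), balHat A a T (((r : ℝ) + 1) / (2 * T : ℕ)) *
      starRingEnd ℂ (hatInd A (((r : ℝ) + 1) / (2 * T : ℕ))) *
      starRingEnd ℂ (sqSum M (((r : ℝ) + 1) / (2 * T : ℕ))) =
    (((2 * T : ℕ) * ∑ y ∈ A, ∑ n ∈ Finset.range (M + 1),
      if y + n ^ 2 < T then (a - if y + n ^ 2 ∈ A then 1 else 0) * (2 * n) else 0 : ℝ) : ℂ) := by
  set P := 2 * T with hP
  have hPpos : 0 < P := by omega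
  have h1 : ∀ r ∈ Finset.range P, balHat A a T (((r : ℝ) + 1) / P) *
      starRingEnd ℂ (hatInd A (((r : ℝ) + 1) / P)) *
      starRingEnd ℂ (sqSum M (((r : ℝ) + 1) / P)) =
      ∑ y ∈ A, ∑ n ∈ Finset.range (M + 1), ∑ x ∈ Finset.range T,
        ((a - if x ∈ A then 1 else 0 : ℝ) : ℂ) * (2 * n) *
          eu (((r : ℝ) + 1) / P * ((x - y - n ^ 2 : ℤ) : ℝ)) := by
    intro r _
    rw [balHat_eq_sum hAT, hatInd, sqSum, map_sum, map_sum, mul_assoc, Finset.sum_mul_sum,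
      mul_comm, Finset.sum_mul]
    refine Finset.sum_congr rfl fun y _ => ?_
    rw [Finset.sum_mul]
    refine Finset.sum_congr rfl fun n _ => ?_
    rw [Finset.mul_sum]
    refine Finset.sum_congr rfl fun x _ => ?_
    have e : (((r : ℝ) + 1) / P * ((x - y - n ^ 2 : ℤ) : ℝ)) =
        -(y * (((r : ℝ) + 1) / P)) + -((n : ℝ) ^ 2 * (((r : ℝ) + 1) / P)) +
          x * (((r : ℝ) + 1) / P) := by
      push_cast; ring
    rw [e, eu_add, eu_add, ← conj_eu, ← conj_eu, map_mul, map_mul, map_natCast, Complex.conj_ofNat]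
    ring
  rw [Finset.sum_congr rfl h1, Finset.sum_comm, Complex.ofReal_mul, Complex.ofReal_sum,
    Finset.mul_sum]
  refine Finset.sum_congr rfl fun y hy => ?_
  rw [Finset.sum_comm, Complex.ofReal_sum, Finset.mul_sum]
  refine Finset.sum_congr rfl fun n hn => ?_
  rw [Finset.sum_comm]
  have h2 : ∀ x ∈ Finset.range T, ∑ r ∈ Finset.range P,
      ((a - if x ∈ A then 1 else 0 : ℝ) : ℂ) * (2 * n) *
          eu (((r : ℝ) + 1) / P * ((x - y - n ^ 2 : ℤ) : ℝ)) =
      if x = y + n ^ 2 then P * (((a - if y + n ^ 2 ∈ A then 1 else 0 : ℝ) : ℂ) * (2 * n))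
        else 0 := by
    intro x hx
    rw [← Finset.mul_sum, sum_eu_div_mul hPpos]
    have hx' := Finset.mem_range.1 hx
    have hy' := Finset.mem_range.1 (hAT hy)
    have hn' : n ^ 2 ≤ T :=
      (Nat.pow_le_pow_left (by have := Finset.mem_range.1 hn; omega) 2).trans hM
    have hiff : (P : ℤ) ∣ (x - y - n ^ 2 : ℤ) ↔ x = y + n ^ 2 := by
      constructor
      · intro h
        have h0 : (x - y - n ^ 2 : ℤ) = 0 := by
          refine Int.eq_zero_of_abs_lt_dvd h ?_
          rw [abs_lt]
          zify at hx' hy' hn' hP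
          constructor <;> nlinarith
        zify; linarith
      · intro h
        have h0 : (x - y - n ^ 2 : ℤ) = 0 := by rw [h]; push_cast; ring
        rw [h0]; exact dvd_zero _
    by_cases h : x = y + n ^ 2
    · rw [if_pos (hiff.2 h), if_pos h, h]; ring
    · rw [if_neg (fun hc => h (hiff.1 hc)), if_neg h, mul_zero]
  rw [Finset.sum_congr rfl h2, Finset.sum_ite_eq']
  simp only [Finset.mem_range]
  split_ifs <;> push_cast <;> simp

/-- Square-difference-freeness forces a large correlation with the squares. -/
lemma NoSquareDiff.le_sum_norm_mul {A : Finset ℕ} (hA : NoSquareDiff A) {T M : ℕ} (hT : 0 < T)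
    (hAT : A ⊆ Finset.range T) (hM : M ^ 2 ≤ T) {a : ℝ} (ha : 0 ≤ a) :
    (2 * T : ℕ) * (a * (M * (M + 1)) * (A.filter fun y => y + M ^ 2 < T).card) ≤
      ∑ r ∈ Finset.range (2 * T), ‖balHat A a T (((r : ℝ) + 1) / (2 * T : ℕ))‖ *
        ‖hatInd A (((r : ℝ) + 1) / (2 * T : ℕ))‖ * ‖sqSum M (((r : ℝ) + 1) / (2 * T : ℕ))‖ := by
  classical
  have h1 : ((2 * T : ℕ) : ℝ) * (a * (M * (M + 1)) * (A.filter fun y => y + M ^ 2 < T).card) ≤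
      (2 * T : ℕ) * ∑ y ∈ A, ∑ n ∈ Finset.range (M + 1),
      if y + n ^ 2 < T then (a - if y + n ^ 2 ∈ A then 1 else 0) * (2 * n) else 0 := by
    refine mul_le_mul_of_nonneg_left ?_ (Nat.cast_nonneg _)
    have hterm : ∀ y ∈ A, ∀ n : ℕ, (if y + n ^ 2 < T then
        (a - if y + n ^ 2 ∈ A then 1 else 0) * (2 * n) else 0 : ℝ) =
        if y + n ^ 2 < T then a * (2 * n) else 0 := by
      intro y hy n
      rcases Nat.eq_zero_or_pos n with rfl | hn
      · simp
      · rw [if_neg (fun h => hA _ h y hy n hn rfl), sub_zero]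
    calc (a * (M * (M + 1)) * (A.filter fun y => y + M ^ 2 < T).card : ℝ)
        = ∑ y ∈ A.filter fun y => y + M ^ 2 < T, ∑ n ∈ Finset.range (M + 1), a * (2 * n) := by
          rw [Finset.sum_const, ← Finset.mul_sum, sum_two_mul_range, nsmul_eq_mul]; ring
      _ ≤ ∑ y ∈ A.filter fun y => y + M ^ 2 < T, ∑ n ∈ Finset.range (M + 1),
            if y + n ^ 2 < T then a * (2 * n) else 0 := by
          refine Finset.sum_le_sum fun y hy => Finset.sum_le_sum fun n hn => ?_
          have h1 := (Finset.mem_filter.1 hy).2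
          have h2 : n ^ 2 ≤ M ^ 2 :=
            Nat.pow_le_pow_left (by have := Finset.mem_range.1 hn; omega) 2
          rw [if_pos (by omega)]
      _ ≤ ∑ y ∈ A, ∑ n ∈ Finset.range (M + 1),
            if y + n ^ 2 < T then a * (2 * n) else 0 := by
          refine Finset.sum_le_sum_of_subset_of_nonneg (Finset.filter_subset _ _) fun y _ _ => ?_
          refine Finset.sum_nonneg fun n _ => ?_
          split_ifs <;> positivity
      _ = _ := by
          refine Finset.sum_congr rfl fun y hy => Finset.sum_congr rfl fun n _ => ?_
          rw [hterm y hy n]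
  refine h1.trans ?_
  have h2 := congrArg norm (sum_balHat_mul_eq hT hAT hM a)
  rw [Complex.norm_real] at h2
  refine (le_abs_self _).trans ((Real.norm_eq_abs _).symm.le.trans (h2.symm.le.trans ?_))
  refine (norm_sum_le _ _).trans (le_of_eq (Finset.sum_congr rfl fun r _ => ?_))
  rw [norm_mul, norm_mul, Complex.norm_conj, Complex.norm_conj]

lemma NoSquareDiff.card_tile_le {A : Finset ℕ} (hA : NoSquareDiff A) {n : ℕ}
    (hn : 0 < n) {D : ℝ} (hD : SquareDiffBound n D) (i : ℕ) :
    ((A.filter fun x => x / n = i).card : ℝ) ≤ D := by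
  have h := hA.card_class_le hn hD one_pos i 0
  simpa [Nat.mod_one] using h

lemma NoSquareDiff.card_tail_le {A : Finset ℕ} (hA : NoSquareDiff A) {n : ℕ}
    (hn : 0 < n) {D : ℝ} (hD : SquareDiffBound n D) {J K : ℕ} (hAT : A ⊆ Finset.range (J * n)) :
    ((A.filter fun y => ¬ y + K < J * n).card : ℝ) ≤ (K / n + 1 : ℕ) * D := by
  have hmaps : ∀ y ∈ A.filter fun y => ¬ y + K < J * n,
      y / n ∈ Finset.Ico (J - (K / n + 1)) J := by
    intro y hy
    obtain ⟨hyA, hy2⟩ := Finset.mem_filter.1 hy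
    have hy3 := Finset.mem_range.1 (hAT hyA)
    rw [Finset.mem_Ico]
    refine ⟨?_, (Nat.div_lt_iff_lt_mul hn).2 hy3⟩
    have h1 := Nat.lt_div_mul_add (a := y) hn
    have h2 := Nat.lt_div_mul_add (a := K) hn
    have h3 : J * n < (y / n + K / n + 2) * n := by nlinarith
    have h4 := lt_of_mul_lt_mul_right h3 (Nat.zero_le _)
    rw [tsub_le_iff_right]
    linarith
  have hcard := Finset.card_eq_sum_card_fiberwise hmaps
  have hD0 : 0 ≤ D := (Nat.cast_nonneg _).trans (hD ∅ (by simp) (by intro a ha; simp at ha))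
  calc ((A.filter fun y => ¬ y + K < J * n).card : ℝ)
      = ∑ i ∈ Finset.Ico (J - (K / n + 1)) J,
        (((A.filter fun y => ¬ y + K < J * n).filter fun y => y / n = i).card : ℝ) := by
        exact_mod_cast hcard
    _ ≤ ∑ i ∈ Finset.Ico (J - (K / n + 1)) J, D := by
        refine Finset.sum_le_sum fun i _ => (Nat.cast_le.2 (Finset.card_le_card ?_)).trans
          (hA.card_tile_le hn hD i)
        exact Finset.filter_subset_filter _ (Finset.filter_subset _ _)
    _ ≤ _ := by
        rw [Finset.sum_const, nsmul_eq_mul, Nat.card_Ico]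
        refine mul_le_mul_of_nonneg_right ?_ hD0
        exact Nat.cast_le.2 tsub_tsub_le

/-- Without a density increment, the balanced function has small Fourier transform near
integers. -/
lemma NoSquareDiff.norm_balHat_near_int_le {A : Finset ℕ} (hA : NoSquareDiff A) {n : ℕ}
    (hn : 0 < n) {a : ℝ} (ha : 0 ≤ a) (hD : SquareDiffBound n (a * n)) {J : ℕ}
    (hAT : A ⊆ Finset.range (J * n)) (m : ℤ) (γ : ℝ) :
    ‖balHat A a (J * n) γ‖ ≤ (a * (J * n : ℕ) - A.card) +
      2 * Real.pi * (n * |γ - m|) * (a * (J * n : ℕ) + A.card) := by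
  classical
  set T := J * n with hT
  set f : ℕ → ℝ := fun x => a - if x ∈ A then 1 else 0 with hf
  set β := γ - m with hβ
  have hper : ∀ x : ℕ, eu (x * γ) = eu (x * β) := fun x =>
    eu_eq_of_sub_eq (x * m) (by rw [hβ]; push_cast; ring)
  have hmaps : ∀ x ∈ Finset.range T, x / n ∈ Finset.range J := fun x hx =>
    Finset.mem_range.2 ((Nat.div_lt_iff_lt_mul hn).2 (Finset.mem_range.1 hx))
  have hsplit : balHat A a T γ = ∑ i ∈ Finset.range J, eu ((i * n : ℕ) * β) *
      ((∑ x ∈ (Finset.range T).filter fun x => x / n = i, f x : ℝ) : ℂ) +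
      ∑ x ∈ Finset.range T, (f x : ℂ) * (eu (x * β) - eu ((x / n * n : ℕ) * β)) := by
    have h1 : ∑ i ∈ Finset.range J, eu ((i * n : ℕ) * β) *
      ((∑ x ∈ (Finset.range T).filter fun x => x / n = i, f x : ℝ) : ℂ) =
        ∑ x ∈ Finset.range T, (f x : ℂ) * eu ((x / n * n : ℕ) * β) := by
      rw [← Finset.sum_fiberwise_of_maps_to hmaps]
      refine Finset.sum_congr rfl fun i _ => ?_
      rw [Complex.ofReal_sum, Finset.mul_sum]
      refine Finset.sum_congr rfl fun y hy => ?_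
      rw [(Finset.mem_filter.1 hy).2, mul_comm]
    rw [h1, ← Finset.sum_add_distrib, balHat_eq_sum hAT]
    refine Finset.sum_congr rfl fun y _ => ?_
    rw [hper]; ring
  have htile : ∀ i ∈ Finset.range J,
      0 ≤ ∑ x ∈ (Finset.range T).filter fun x => x / n = i, f x := by
    intro i hi
    have hset : ((Finset.range T).filter fun x => x / n = i) = Finset.Ico (i * n) ((i + 1) * n) := by
      ext x
      simp only [Finset.mem_filter, Finset.mem_range, Finset.mem_Ico, Nat.div_eq_iff hn]
      have h1 : (i + 1) * n ≤ T := Nat.mul_le_mul_right _ (Finset.mem_range.1 hi)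
      rw [add_mul, one_mul] at *
      omega
    have hA2 : ((((Finset.range T).filter fun x => x / n = i).filter fun x => x ∈ A).card : ℝ) ≤
        a * n := by
      refine (Nat.cast_le.2 (Finset.card_le_card ?_)).trans (hA.card_tile_le hn hD i)
      intro x hx
      simp only [Finset.mem_filter] at hx ⊢
      exact ⟨hx.2, hx.1.2⟩
    simp only [hf]
    rw [Finset.sum_sub_distrib, Finset.sum_const, Finset.sum_boole, nsmul_eq_mul]
    have hc : ((Finset.range T).filter fun x => x / n = i).card = n := by
      rw [hset, Nat.card_Ico]; rw [add_mul, one_mul]; omega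
    rw [hc]
    linarith
  have hsumf : ∑ x ∈ Finset.range T, f x = a * T - A.card := by
    simp only [hf]
    rw [Finset.sum_sub_distrib, Finset.sum_const, Finset.sum_boole, nsmul_eq_mul,
      Finset.filter_mem_eq_inter, Finset.inter_eq_right.2 hAT, Finset.card_range]
    ring
  have habs : ∑ x ∈ Finset.range T, |f x| ≤ a * T + A.card := by
    have h : ∀ x ∈ Finset.range T, |f x| ≤ a + if x ∈ A then 1 else 0 := by
      intro x _
      simp only [hf]
      refine (abs_sub _ _).trans ?_
      rw [abs_of_nonneg ha, abs_of_nonneg]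
      split_ifs <;> norm_num
    refine (Finset.sum_le_sum h).trans (le_of_eq ?_)
    rw [Finset.sum_add_distrib, Finset.sum_const, Finset.sum_boole, nsmul_eq_mul,
      Finset.filter_mem_eq_inter, Finset.inter_eq_right.2 hAT, Finset.card_range]
    ring
  rw [hsplit]
  refine (norm_add_le _ _).trans (add_le_add ?_ ?_)
  · rw [← hsumf, ← Finset.sum_fiberwise_of_maps_to hmaps]
    refine norm_sum_le_of_le _ fun i hi => ?_
    rw [norm_mul, norm_eu, one_mul, Complex.norm_real, Real.norm_eq_abs, abs_of_nonneg (htile i hi)]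
  · have hpt : ∀ x ∈ Finset.range T,
        ‖(f x : ℂ) * (eu (x * β) - eu ((x / n * n : ℕ) * β))‖ ≤
        2 * Real.pi * (n * |β|) * |f x| := by
      intro x _
      rw [norm_mul, Complex.norm_real, Real.norm_eq_abs, mul_comm]
      refine mul_le_mul_of_nonneg_right ?_ (abs_nonneg _)
      refine (norm_eu_sub_eu_le _ _).trans ?_
      rw [← sub_mul, abs_mul]
      have hpi := Real.two_pi_pos
      gcongr
      have h1 : (x : ℝ) = ((x / n * n : ℕ) : ℝ) + ((x % n : ℕ) : ℝ) := by
        exact_mod_cast (Nat.div_add_mod' x n).symm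
      have h2 : ((x % n : ℕ) : ℝ) ≤ n := by exact_mod_cast (Nat.mod_lt x hn).le
      rw [h1, add_sub_cancel_left, abs_of_nonneg (Nat.cast_nonneg _)]
      exact h2
    refine (norm_sum_le_of_le _ hpt).trans ?_
    rw [← Finset.mul_sum]
    refine mul_le_mul_of_nonneg_left habs ?_
    have hpi := Real.two_pi_pos
    positivity

lemma sum_norm_sq_fourier_eq_of_subset {P : ℕ} (s : Finset ℕ) (hs : s ⊆ Finset.range P)
    (f : ℕ → ℝ) :
    ∑ r ∈ Finset.range P, ‖∑ y ∈ s, (f y : ℂ) * eu (y * (((r : ℝ) + 1) / P))‖ ^ 2 =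
      P * ∑ y ∈ s, f y ^ 2 := by
  rcases Nat.eq_zero_or_pos P with rfl | hP
  · simp
  rw [sum_norm_sq_fourier_eq hP]
  congr 1
  refine Finset.sum_congr rfl fun y hy => ?_
  have h : ∀ z ∈ s, (if (P : ℤ) ∣ (y : ℤ) - z then f y * f z else 0) =
      if y = z then f y ^ 2 else 0 := by
    intro z hz
    have h1 := Finset.mem_range.1 (hs hy)
    have h2 := Finset.mem_range.1 (hs hz)
    by_cases hyz : y = z
    · subst hyz; simp [pow_two]
    · rw [if_neg hyz, if_neg]
      intro hd
      have := Int.eq_zero_of_abs_lt_dvd hd (by rw [abs_lt]; constructor <;> omega)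
      omega
  rw [Finset.sum_congr rfl h, Finset.sum_ite_eq, if_pos hy]

lemma sum_norm_sq_hatInd_eq {P : ℕ} {A : Finset ℕ} (hA : A ⊆ Finset.range P) :
    ∑ r ∈ Finset.range P, ‖hatInd A (((r : ℝ) + 1) / P)‖ ^ 2 = P * A.card := by
  have h := sum_norm_sq_fourier_eq_of_subset A hA fun _ => 1
  simpa [hatInd] using h

lemma sum_norm_sq_balHat_le {P T : ℕ} {A : Finset ℕ} (hTP : T ≤ P) (hA : A ⊆ Finset.range T)
    {a : ℝ} (ha : 0 ≤ a) :
    ∑ r ∈ Finset.range P, ‖balHat A a T (((r : ℝ) + 1) / P)‖ ^ 2 ≤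
      P * (a ^ 2 * T + A.card) := by
  classical
  simp only [balHat_eq_sum hA]
  rw [sum_norm_sq_fourier_eq_of_subset _ (Finset.range_subset_range.2 hTP)]
  refine mul_le_mul_of_nonneg_left ?_ (Nat.cast_nonneg _)
  have h : ∀ x ∈ Finset.range T, (a - if x ∈ A then 1 else 0 : ℝ) ^ 2 ≤
      a ^ 2 + if x ∈ A then 1 else 0 := by
    intro x _
    split_ifs <;> nlinarith
  refine (Finset.sum_le_sum h).trans (le_of_eq ?_)
  rw [Finset.sum_add_distrib, Finset.sum_const, Finset.sum_boole, nsmul_eq_mul,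
    Finset.filter_mem_eq_inter, Finset.inter_eq_right.2 hA, Finset.card_range]
  ring

lemma norm_balHat_le_of_far {A : Finset ℕ} {a γ K : ℝ} (ha : 0 ≤ a) {T : ℕ} (hγ0 : 0 < γ)
    (hγ1 : γ < 1) (hK0 : 1 ≤ 2 * K * γ) (hK1 : 1 ≤ 2 * K * (1 - γ)) :
    ‖balHat A a T γ‖ ≤ a * K + ‖hatInd A γ‖ := by
  refine (norm_sub_le _ _).trans (add_le_add_left ?_ _)
  rw [norm_mul, Complex.norm_real, Real.norm_eq_abs, abs_of_nonneg ha]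
  refine mul_le_mul_of_nonneg_left ?_ ha
  rcases le_total γ (1 / 2) with h | h
  · refine (norm_sum_range_eu_le T 0 (by simpa using hγ0.ne') ?_).trans ?_
    · rw [Int.cast_zero, sub_zero, abs_of_pos hγ0]; exact h
    · rw [Int.cast_zero, sub_zero, abs_of_pos hγ0, div_le_iff₀ (by positivity)]
      linarith
  · refine (norm_sum_range_eu_le T 1 (by simpa using hγ1.ne) ?_).trans ?_
    · rw [Int.cast_one, abs_of_neg (by linarith)]; linarith
    · rw [Int.cast_one, abs_of_neg (by linarith), div_le_iff₀ (by linarith)]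
      linarith

/-! ### Major and minor arcs -/

/-- The rationals in `[0, 1]` with denominator at most `K`. -/
noncomputable def farey (K : ℕ) : Finset ℚ :=
  ((Finset.range (K + 1) ×ˢ Finset.range (K + 1)).image fun p => (p.1 : ℚ) / p.2).filter
    fun x => x ≤ 1 ∧ x.den ≤ K

lemma mem_farey {K : ℕ} {x : ℚ} : x ∈ farey K ↔ 0 ≤ x ∧ x ≤ 1 ∧ x.den ≤ K := by
  constructor
  · intro h
    obtain ⟨h1, h2⟩ := Finset.mem_filter.1 h
    obtain ⟨p, -, rfl⟩ := Finset.mem_image.1 h1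
    exact ⟨by positivity, h2⟩
  · rintro ⟨h0, h1, h2⟩
    refine Finset.mem_filter.2 ⟨Finset.mem_image.2 ⟨(x.num.toNat, x.den), ?_, ?_⟩, h1, h2⟩
    · have h3 := Rat.num_nonneg.2 h0
      have h4 : x.num ≤ x.den := Rat.num_le_denom_iff.2 h1
      simp only [Finset.mem_product, Finset.mem_range]
      omega
    · have h3 : ((x.num.toNat : ℤ) : ℚ) = x.num := by
        rw [Int.toNat_of_nonneg (Rat.num_nonneg.2 h0)]
      rw [Int.cast_natCast] at h3
      simp only [h3]
      exact Rat.num_div_den x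

lemma card_farey_le (K : ℕ) : (farey K).card ≤ (K + 1) ^ 2 := by
  refine (Finset.card_filter_le _ _).trans (Finset.card_image_le.trans ?_)
  rw [Finset.card_product, Finset.card_range, pow_two]

lemma exists_rat_mem_Icc_abs_sub_le {γ : ℝ} (h0 : 0 ≤ γ) (h1 : γ ≤ 1) {n : ℕ} (hn : 0 < n) :
    ∃ x : ℚ, 0 ≤ x ∧ x ≤ 1 ∧ x.den ≤ n ∧ |γ - x| ≤ 1 / ((n + 1) * x.den) := by
  obtain ⟨x, hx, hxn⟩ := Real.exists_rat_abs_sub_le_and_den_le γ hn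
  have hd : (0 : ℝ) < x.den := by exact_mod_cast x.pos
  have hnr : (0 : ℝ) < n := by exact_mod_cast hn
  have hlt : 1 / (((n : ℝ) + 1) * x.den) < 1 / x.den := by
    apply one_div_lt_one_div_of_lt hd; nlinarith
  have hxe : (x : ℝ) = x.num / x.den := Rat.cast_def x
  refine ⟨x, ?_, ?_, hxn, hx⟩
  · by_contra! hneg
    have h2 : x.num ≤ -1 := by have := Rat.num_neg.2 hneg; omega
    have h3 : (x : ℝ) ≤ -(1 / x.den) := by
      rw [hxe, ← neg_div]
      gcongr
      exact_mod_cast h2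
    have := (le_abs_self _).trans hx
    linarith
  · by_contra! hgt
    have h2 : (x.den : ℤ) + 1 ≤ x.num := by
      have h4 : ¬ x.num ≤ x.den := fun h => absurd (Rat.num_le_denom_iff.1 h) (not_le.2 hgt)
      omega
    have h3 : 1 + 1 / (x.den : ℝ) ≤ x := by
      rw [hxe, le_div_iff₀ hd, add_mul, one_mul, one_div, inv_mul_cancel₀ hd.ne']
      exact_mod_cast h2
    have := (neg_le_abs _).trans hx
    linarith

/-- The bound for the sum of `‖sqSum M γ‖` over a major arc of denominator `q`. -/
noncomputable def arcBound (M P H : ℕ) (κ : ℝ) (q : ℕ) : ℝ :=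
  2 / √q * (2 * (M * (M + 1)) + P * (1 + Real.log H)) + 2 * (H + 1) * (100 * q * M * (1 + M ^ 2 * κ))

lemma arcBound_nonneg (M P H : ℕ) {κ : ℝ} (hκ : 0 ≤ κ) (q : ℕ) : 0 ≤ arcBound M P H κ q := by
  have := Real.log_natCast_nonneg H
  unfold arcBound
  positivity

lemma exists_forall_arc_norm_hatInd_le (A : Finset ℕ) {P : ℕ} (x : ℚ) (h0 : 0 < x) (h1 : x ≤ 1)
    {κ : ℝ} (hκ : 0 ≤ κ) :
    ∃ γ : ℝ, γ ∈ Set.Ioc (0 : ℝ) 1 ∧ |γ - x| ≤ κ ∧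
      ∀ r ∈ (Finset.range P).filter fun r : ℕ => |((r : ℝ) + 1) / P - x| ≤ κ,
        ‖hatInd A (((r : ℝ) + 1) / P)‖ ≤ ‖hatInd A γ‖ := by
  rcases ((Finset.range P).filter fun r : ℕ => |((r : ℝ) + 1) / P - x| ≤ κ).eq_empty_or_nonempty
    with h | h
  · refine ⟨x, ⟨by exact_mod_cast h0, by exact_mod_cast h1⟩, by simpa using hκ, ?_⟩
    rw [h]; simp
  · obtain ⟨r, hr, hmax⟩ := Finset.exists_max_image _
      (fun r : ℕ => ‖hatInd A (((r : ℝ) + 1) / P)‖) h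
    obtain ⟨hr1, hr2⟩ := Finset.mem_filter.1 hr
    have hrP : (r : ℝ) + 1 ≤ P := by exact_mod_cast Finset.mem_range.1 hr1
    have hP : (0 : ℝ) < P := by have : (0 : ℝ) ≤ r := Nat.cast_nonneg _; linarith
    exact ⟨_, ⟨by positivity, (div_le_one hP).2 hrP⟩, hr2, hmax⟩

lemma far_of_near_rat {x : ℚ} (h0 : 0 < x) (h1 : x < 1) {K : ℕ} (hK : x.den ≤ K) {κ ξ : ℝ}
    (hκ : 2 * K * κ ≤ 1) (hξ : |ξ - x| ≤ κ) :
    0 < ξ ∧ ξ < 1 ∧ 1 ≤ 2 * K * ξ ∧ 1 ≤ 2 * K * (1 - ξ) := by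
  have hξ' := abs_le.1 hξ
  have hd : (0 : ℝ) < x.den := by exact_mod_cast x.pos
  have hdK : (x.den : ℝ) ≤ K := by exact_mod_cast hK
  have hK0 : (0 : ℝ) < K := hd.trans_le hdK
  have hxe : (x : ℝ) * x.den = x.num := by exact_mod_cast Rat.mul_den_eq_num x
  have hn1 : (1 : ℝ) ≤ x.num := by exact_mod_cast Rat.num_pos.2 h0
  have hn2 : (x.num : ℝ) + 1 ≤ x.den := by exact_mod_cast Rat.num_lt_denom_iff.2 h1
  have hx0 : (0 : ℝ) < x := by exact_mod_cast h0
  have hx1 : (x : ℝ) < 1 := by exact_mod_cast h1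
  have hKx : 1 ≤ K * (x : ℝ) := by nlinarith
  have hKx1 : 1 ≤ K * (1 - (x : ℝ)) := by nlinarith
  have e1 : 1 ≤ 2 * K * ξ := by nlinarith
  have e2 : 1 ≤ 2 * K * (1 - ξ) := by nlinarith
  exact ⟨by by_contra! h; nlinarith, by by_contra! h; nlinarith, e1, e2⟩

lemma NoSquareDiff.card_le_sum_major_arcs {A : Finset ℕ} (hA : NoSquareDiff A) {n : ℕ}
    (hn : 0 < n) {a : ℝ} (ha : 0 ≤ a) (hD : SquareDiffBound n (a * n)) {J : ℕ}
    (hAT : A ⊆ Finset.range (J * n)) (hJ : 0 < J) {M K H : ℕ} (hM : M ^ 2 ≤ J * n)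
    {κ E : ℝ} (hE : 0 ≤ E) (hK : 1 ≤ K) (hκ0 : 0 ≤ κ) (hκ : 2 * K * κ ≤ 1) (hH : κ * (2 * (J * n) : ℕ) ≤ H)
    (hminor : ∀ γ : ℝ, 0 ≤ γ → γ ≤ 1 →
      ‖sqSum M γ‖ ≤ E ∨ ∃ x : ℚ, 0 ≤ x ∧ x ≤ 1 ∧ x.den ≤ K ∧ |γ - x| ≤ κ) :
    ∃ γ : ℚ → ℝ, (∀ x, 0 < x → x ≤ 1 → γ x ∈ Set.Ioc (0 : ℝ) 1 ∧ |γ x - x| ≤ κ) ∧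
      (2 * (J * n) : ℕ) * (a * (M * (M + 1)) * (A.filter fun y => y + M ^ 2 < J * n).card) ≤
        E * ((2 * (J * n) : ℕ) * (a ^ 2 * (J * n : ℕ) + 2 * A.card)) +
        2 * (((a * (J * n : ℕ) - A.card) + 2 * Real.pi * (n * κ) * (a * (J * n : ℕ) + A.card)) *
          A.card * arcBound M (2 * (J * n)) H κ 1) +
        ∑ x ∈ (farey K).filter (fun x => 0 < x ∧ x < 1),
          (‖hatInd A (γ x)‖ ^ 2 + a * K * A.card) * arcBound M (2 * (J * n)) H κ x.den := by
  have hex : ∀ x : ℚ, ∃ γ : ℝ, 0 < x → x ≤ 1 → γ ∈ Set.Ioc (0 : ℝ) 1 ∧ |γ - x| ≤ κ ∧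
      ∀ r ∈ (Finset.range (2 * (J * n))).filter
        fun r : ℕ => |((r : ℝ) + 1) / (2 * (J * n) : ℕ) - x| ≤ κ,
        ‖hatInd A (((r : ℝ) + 1) / (2 * (J * n) : ℕ))‖ ≤ ‖hatInd A γ‖ := by
    intro x
    by_cases hx : 0 < x ∧ x ≤ 1
    · obtain ⟨γ, h⟩ := exists_forall_arc_norm_hatInd_le A (P := 2 * (J * n)) x hx.1 hx.2 hκ0
      exact ⟨γ, fun _ _ => h⟩
    · exact ⟨0, fun h0 h1 => absurd ⟨h0, h1⟩ hx⟩
  choose γ hγ using hex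
  refine ⟨γ, fun x h0 h1 => ⟨(hγ x h0 h1).1, (hγ x h0 h1).2.1⟩, ?_⟩
  have hTpos : 0 < J * n := Nat.mul_pos hJ hn
  refine (hA.le_sum_norm_mul hTpos hAT hM ha).trans ?_
  set T := J * n with hT
  set P := 2 * T with hP
  set G : ℝ := (a * T - A.card) + 2 * Real.pi * (n * κ) * (a * T + A.card) with hG
  have hPpos : (0 : ℝ) < P := by exact_mod_cast (by omega : 0 < P)
  have hAc : (0 : ℝ) ≤ A.card := Nat.cast_nonneg _
  set g : ℕ → ℝ := fun r => ‖balHat A a T (((r : ℝ) + 1) / P)‖ *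
    ‖hatInd A (((r : ℝ) + 1) / P)‖ with hg
  set s : ℕ → ℝ := fun r => ‖sqSum M (((r : ℝ) + 1) / P)‖ with hs
  have hg0 : ∀ r, 0 ≤ g r := fun r => by positivity
  have hs0 : ∀ r, 0 ≤ s r := fun r => norm_nonneg _
  set arc : ℚ → Finset ℕ := fun x =>
    (Finset.range P).filter fun r : ℕ => |((r : ℝ) + 1) / P - x| ≤ κ with harc
  have hκ1 : κ ≤ 1 / 2 := by
    have : (1 : ℝ) ≤ K := by exact_mod_cast hK
    nlinarith
  have hsum_arc : ∀ x : ℚ, ∑ r ∈ arc x, s r ≤ arcBound M P H κ x.den := fun x =>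
    sum_norm_sqSum_arc_le M P H (by omega) x hκ0 hκ1 hH
  have hsplit : ∀ r ∈ Finset.range P, g r * s r ≤ E * g r +
      ∑ x ∈ farey K, if |((r : ℝ) + 1) / P - x| ≤ κ then g r * s r else 0 := by
    intro r hr
    have hrP : (r : ℝ) + 1 ≤ P := by exact_mod_cast Finset.mem_range.1 hr
    have hnn : ∀ x ∈ farey K, (0 : ℝ) ≤ if |((r : ℝ) + 1) / P - x| ≤ κ then g r * s r else 0 := by
      intro x _
      split_ifs
      · exact mul_nonneg (hg0 r) (hs0 r)
      · exact le_rfl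
    rcases hminor (((r : ℝ) + 1) / P) (by positivity) ((div_le_one hPpos).2 hrP) with h | h
    · have h1 : g r * s r ≤ E * g r := by
        rw [mul_comm]
        exact mul_le_mul_of_nonneg_right h (hg0 r)
      linarith [Finset.sum_nonneg hnn]
    · obtain ⟨x, hx0, hx1, hxK, hx⟩ := h
      have h1 := Finset.single_le_sum hnn (mem_farey.2 ⟨hx0, hx1, hxK⟩)
      rw [if_pos hx] at h1
      have h2 : 0 ≤ E * g r := mul_nonneg hE (hg0 r)
      linarith
  have harcs : ∑ r ∈ Finset.range P, ∑ x ∈ farey K,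
      (if |((r : ℝ) + 1) / P - x| ≤ κ then g r * s r else 0) =
      ∑ x ∈ farey K, ∑ r ∈ arc x, g r * s r := by
    rw [Finset.sum_comm]
    exact Finset.sum_congr rfl fun x _ => (Finset.sum_filter _ _).symm
  have hmul : ∀ (x : ℚ) (b : ℝ), (∀ r ∈ arc x, g r ≤ b) → 0 ≤ b →
      ∑ r ∈ arc x, g r * s r ≤ b * arcBound M P H κ x.den := by
    intro x b hb hb0
    calc ∑ r ∈ arc x, g r * s r ≤ ∑ r ∈ arc x, b * s r :=
          Finset.sum_le_sum fun r hr => mul_le_mul_of_nonneg_right (hb r hr) (hs0 r)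
      _ = b * ∑ r ∈ arc x, s r := by rw [Finset.mul_sum]
      _ ≤ _ := mul_le_mul_of_nonneg_left (hsum_arc x) hb0
  have hmass : ∑ r ∈ Finset.range P, g r ≤ P * (a ^ 2 * T + 2 * A.card) := by
    have h1 := sum_norm_sq_balHat_le (P := P) (by omega) hAT ha
    have h2 := sum_norm_sq_hatInd_eq (P := P)
      (hAT.trans (Finset.range_subset_range.2 (by omega)))
    have h3 : ∑ r ∈ Finset.range P, g r ≤ ∑ r ∈ Finset.range P,
        (‖balHat A a T (((r : ℝ) + 1) / P)‖ ^ 2 + ‖hatInd A (((r : ℝ) + 1) / P)‖ ^ 2) :=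
      Finset.sum_le_sum fun r _ => by
        simp only [hg]
        nlinarith [sq_nonneg (‖balHat A a T (((r : ℝ) + 1) / P)‖ -
          ‖hatInd A (((r : ℝ) + 1) / P)‖), sq_nonneg (‖balHat A a T (((r : ℝ) + 1) / P)‖),
          sq_nonneg ‖hatInd A (((r : ℝ) + 1) / P)‖]
    rw [Finset.sum_add_distrib, h2] at h3
    linarith
  have hG' : 0 ≤ G := by
    have h1 := (norm_nonneg _).trans (hA.norm_balHat_near_int_le hn ha hD hAT 0 0)
    simp only [Int.cast_zero, sub_zero, abs_zero, mul_zero, zero_mul, add_zero] at h1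
    have hpi := Real.two_pi_pos
    have : 0 ≤ 2 * Real.pi * (n * κ) * (a * T + A.card) := by positivity
    linarith
  have hG0 : 0 ≤ G * A.card := mul_nonneg hG' hAc
  have hnear : ∀ m : ℤ, ∀ r ∈ arc (m : ℚ), g r ≤ G * A.card := by
    intro m r hr
    have hr2 := (Finset.mem_filter.1 hr).2
    rw [Rat.cast_intCast] at hr2
    refine mul_le_mul ?_ (norm_hatInd_le _ _) (norm_nonneg _) hG'
    refine (hA.norm_balHat_near_int_le hn ha hD hAT m _).trans ?_
    have hpi := Real.two_pi_pos
    rw [hG]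
    gcongr
  have hint : ∑ x ∈ (farey K).filter (fun x => ¬(0 < x ∧ x < 1)), ∑ r ∈ arc x, g r * s r ≤
      2 * (G * A.card * arcBound M P H κ 1) := by
    have hsub : (farey K).filter (fun x => ¬(0 < x ∧ x < 1)) ⊆ {0, 1} := by
      intro x hx
      obtain ⟨h1, h2⟩ := Finset.mem_filter.1 hx
      obtain ⟨h3, h4, -⟩ := mem_farey.1 h1
      simp only [Finset.mem_insert, Finset.mem_singleton]
      rcases h3.eq_or_lt with h | h
      · exact Or.inl h.symm
      · exact Or.inr (le_antisymm h4 (not_lt.1 fun h5 => h2 ⟨h, h5⟩))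
    refine (Finset.sum_le_sum_of_subset_of_nonneg hsub fun x _ _ =>
      Finset.sum_nonneg fun r _ => mul_nonneg (hg0 r) (hs0 r)).trans ?_
    rw [Finset.sum_pair zero_ne_one]
    have h0 := hmul 0 _ (by simpa using hnear 0) hG0
    have h1 := hmul 1 _ (by simpa using hnear 1) hG0
    rw [Rat.den_zero] at h0
    rw [Rat.den_one] at h1
    linarith
  have hfar : ∀ x ∈ (farey K).filter (fun x => 0 < x ∧ x < 1), ∑ r ∈ arc x, g r * s r ≤
      (‖hatInd A (γ x)‖ ^ 2 + a * K * A.card) * arcBound M P H κ x.den := by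
    intro x hx
    obtain ⟨h1, h2, h3⟩ := Finset.mem_filter.1 hx
    obtain ⟨-, -, h4⟩ := mem_farey.1 h1
    refine hmul x _ ?_ (by positivity)
    intro r hr
    have hF := (hγ x h2 h3.le).2.2 r hr
    set ξ : ℝ := ((r : ℝ) + 1) / P with hξ
    obtain ⟨e1, e2, e3, e4⟩ := far_of_near_rat h2 h3 h4 hκ (Finset.mem_filter.1 hr).2
    have h5 := norm_balHat_le_of_far (A := A) (T := T) ha e1 e2 e3 e4
    have h6 := norm_hatInd_le A ξ
    calc g r ≤ (a * K + ‖hatInd A ξ‖) * ‖hatInd A ξ‖ :=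
          mul_le_mul_of_nonneg_right h5 (norm_nonneg _)
      _ = ‖hatInd A ξ‖ ^ 2 + a * K * ‖hatInd A ξ‖ := by ring
      _ ≤ _ := by gcongr
  refine (Finset.sum_le_sum hsplit).trans ?_
  rw [Finset.sum_add_distrib, harcs, ← Finset.mul_sum,
    ← Finset.sum_filter_not_add_sum_filter (farey K) (fun x => 0 < x ∧ x < 1), ← add_assoc]
  exact add_le_add (add_le_add (mul_le_mul_of_nonneg_left hmass hE) hint)
    (Finset.sum_le_sum hfar)

/-! ### Choice of parameters -/

lemma norm_sqSum_le_or_near_rat {N M K : ℕ} {X : ℝ} (hX : 5 / 3 ≤ X) (hMN : 16 * (M : ℝ) ^ 2 ≤ N)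
    (hM : X ^ 400 ≤ M) (hK : X ^ 40 ≤ K) (hK' : (K : ℝ) ≤ 2 * X ^ 40) {γ : ℝ} (h0 : 0 ≤ γ)
    (h1 : γ ≤ 1) :
    ‖sqSum M γ‖ ≤ N / X ^ 16 ∨
      ∃ x : ℚ, 0 ≤ x ∧ x ≤ 1 ∧ x.den ≤ K ∧ |γ - x| ≤ X ^ 20 / N := by
  have hX0 : 0 < X := by linarith
  have hX1 : 1 ≤ X := by linarith
  have hM1 : (1 : ℝ) ≤ M := (one_le_pow₀ hX1).trans hM
  have hM0 : (0 : ℝ) < M := by linarith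
  have hMnat : 0 < M := by exact_mod_cast hM0
  have hN0 : (0 : ℝ) < N := by nlinarith
  have hpow : ∀ k : ℕ, (5 / 3 : ℝ) ^ k ≤ X ^ k := fun k => by gcongr
  -- any power up to `X ^ 400` times `M` is negligible
  have hneg : ∀ k : ℕ, k + 32 ≤ 400 → M * X ^ k ≤ N / 16 / X ^ 32 := by
    intro k hk
    rw [le_div_iff₀ (by positivity), mul_assoc, ← pow_add]
    have : X ^ (k + 32) ≤ M := (pow_le_pow_right₀ hX1 hk).trans hM
    nlinarith
  set D : ℕ := M * ⌈X ^ 24⌉₊ with hD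
  have hceil1 : X ^ 24 ≤ (⌈X ^ 24⌉₊ : ℝ) := Nat.le_ceil _
  have hceil2 : (⌈X ^ 24⌉₊ : ℝ) ≤ 2 * X ^ 24 := by
    have := (Nat.ceil_lt_add_one (by positivity : 0 ≤ X ^ 24)).le
    have h2 : 1 ≤ X ^ 24 := one_le_pow₀ hX1
    linarith
  have hD1 : M * X ^ 24 ≤ (D : ℝ) := by rw [hD]; push_cast; gcongr
  have hD2 : (D : ℝ) ≤ 2 * (M * X ^ 24) := by
    rw [hD]; push_cast
    calc (M : ℝ) * ⌈X ^ 24⌉₊ ≤ M * (2 * X ^ 24) := by gcongr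
      _ = _ := by ring
  have hDpos : 0 < D := Nat.mul_pos hMnat (Nat.ceil_pos.2 (by positivity))
  obtain ⟨x, hx0, hx1, hxD, hx⟩ := exists_rat_mem_Icc_abs_sub_le h0 h1 hDpos
  set q := x.den with hq
  have hqpos : 0 < q := x.pos
  have hq1 : (1 : ℝ) ≤ q := by exact_mod_cast hqpos
  have hqD : (q : ℝ) ≤ D := by exact_mod_cast hxD
  have hcop : IsCoprime x.num (q : ℤ) := by
    rw [Int.isCoprime_iff_gcd_eq_one]; exact x.reduced
  have hxe : (x : ℝ) = x.num / q := Rat.cast_def x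
  rcases le_or_gt q K with hqK | hqK
  · rcases le_or_gt |γ - x| (X ^ 20 / N) with hnear | hfar
    · exact Or.inr ⟨x, hx0, hx1, hqK, hnear⟩
    left
    have hqK' : (q : ℝ) ≤ 2 * X ^ 40 := le_trans (by exact_mod_cast hqK) hK'
    set β := γ - x with hβ
    have hmaj := norm_sqSum_rat_add_le M hqpos hcop β
    rw [← hxe, hβ, add_sub_cancel, ← hβ] at hmaj
    have hβpos : 0 < |β| := lt_trans (by positivity) hfar
    have hDr : (1 : ℝ) ≤ D := by exact_mod_cast hDpos
    have hβhalf : |β| ≤ 1 / 2 := by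
      refine hx.trans ?_
      apply one_div_le_one_div_of_le (by norm_num)
      nlinarith
    have hgeom := norm_sum_range_eu_le (M * (M + 1)) 0 (x := β)
      (by simpa using abs_pos.1 hβpos) (by simpa using hβhalf)
    rw [Int.cast_zero, sub_zero] at hgeom
    have hgeom2 : 1 / (2 * |β|) ≤ N / (2 * X ^ 20) := by
      rw [div_lt_iff₀ hN0] at hfar
      rw [div_le_div_iff₀ (by positivity) (by positivity)]
      nlinarith
    have hsq : 2 / √(q : ℝ) ≤ 2 := by
      rw [div_le_iff₀ (by positivity)]
      have : 1 ≤ √(q : ℝ) := Real.one_le_sqrt.2 hq1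
      linarith
    have t1 : 2 / √(q : ℝ) * ‖∑ u ∈ Finset.range (M * (M + 1)), eu (u * β)‖ ≤ N / X ^ 20 := by
      calc _ ≤ 2 * (N / (2 * X ^ 20)) := by gcongr; exact hgeom.trans hgeom2
        _ = _ := by field_simp
    have t2 : q * |β| ≤ 1 / (M * X ^ 24) := by
      have : q * |β| ≤ q * (1 / (((D : ℝ) + 1) * q)) := by gcongr
      refine this.trans ?_
      rw [show q * (1 / (((D : ℝ) + 1) * q)) = 1 / ((D : ℝ) + 1) by field_simp]
      apply one_div_le_one_div_of_le (by positivity)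
      linarith
    have t3 : 100 * q * M * (1 + M ^ 2 * |β|) ≤ 200 * (M * X ^ 40) + 100 * (M ^ 2 / X ^ 24) := by
      calc 100 * q * M * (1 + M ^ 2 * |β|) = 100 * M * q + 100 * M ^ 3 * (q * |β|) := by ring
        _ ≤ 100 * M * (2 * X ^ 40) + 100 * M ^ 3 * (1 / (M * X ^ 24)) := by gcongr
        _ = _ := by field_simp; ring
    have t4 : 200 * (M * X ^ 40) ≤ N / 16 / X ^ 32 := by
      refine le_trans ?_ (hneg 60 (by norm_num))
      have h60 : X ^ 60 = X ^ 20 * X ^ 40 := by ring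
      have h20 := hpow 20
      have : (200 : ℝ) ≤ X ^ 20 := le_trans (by norm_num) h20
      rw [h60]
      calc 200 * (M * X ^ 40) ≤ X ^ 20 * (M * X ^ 40) := by gcongr
        _ = _ := by ring
    have p16 : (0 : ℝ) < N / X ^ 16 := by positivity
    have t5 : N / X ^ 20 ≤ N / X ^ 16 / 4 := by
      have h4 : (4 : ℝ) ≤ X ^ 4 := le_trans (by norm_num) (hpow 4)
      rw [div_div]
      gcongr
      calc X ^ 16 * 4 ≤ X ^ 16 * X ^ 4 := by gcongr
        _ = _ := by ring
    have t6 : 100 * (M ^ 2 / X ^ 24) ≤ N / X ^ 16 / 4 := by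
      have h8 : (25 : ℝ) ≤ X ^ 8 := le_trans (by norm_num) (hpow 8)
      rw [div_div, mul_div_assoc', div_le_div_iff₀ (by positivity) (by positivity)]
      calc 100 * (M : ℝ) ^ 2 * (X ^ 16 * 4) = 16 * M ^ 2 * (X ^ 16 * 25) := by ring
        _ ≤ N * (X ^ 16 * X ^ 8) := by gcongr
        _ = _ := by ring
    have t7 : N / 16 / X ^ 32 ≤ N / X ^ 16 / 4 := by
      rw [div_div, div_div]
      refine div_le_div_of_nonneg_left hN0.le (by positivity) ?_
      have : X ^ 16 ≤ X ^ 32 := pow_le_pow_right₀ hX1 (by norm_num)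
      have : 0 < X ^ 16 := by positivity
      linarith
    linarith
  · left
    have hqK' : X ^ 40 ≤ (q : ℝ) := hK.trans (by exact_mod_cast hqK.le)
    have hs : √(N : ℝ) ^ 2 = N := Real.sq_sqrt hN0.le
    have h4M : 4 * (M : ℝ) ≤ √N := by
      apply Real.le_sqrt_of_sq_le; nlinarith
    have hw := norm_sqSum_le_of_weyl (γ := γ) hqpos hcop (δ := X ^ 32 / M) ?_ (by positivity) M
      (R := √N / X ^ 16) (by positivity) ?_
    · refine hw.trans ?_
      calc 4 * (M : ℝ) * (√N / X ^ 16) ≤ √N * (√N / X ^ 16) := by gcongr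
        _ = √N ^ 2 / X ^ 16 := by ring
        _ = _ := by rw [hs]
    · rw [← hxe]
      refine hx.trans ?_
      apply one_div_le_one_div_of_le (by positivity)
      rw [pow_two]
      gcongr
      linarith
    · rw [div_pow, hs, ← pow_mul]
      have u1 : 2 * ((M : ℝ) + 1) * ((4 * (M + 1) / q + 1) * (4 * q * (X ^ 32 / M) + 2)) ≤
          2 * (2 * M) * ((4 * (2 * M) / q + 1) * (4 * q * (X ^ 32 / M) + 2)) := by
        have : (M : ℝ) + 1 ≤ 2 * M := by linarith
        gcongr
      have u2 : 2 * (2 * M) * ((4 * (2 * M) / q + 1) * (4 * q * (X ^ 32 / M) + 2)) =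
          128 * (M * X ^ 32) + 64 * (M ^ 2 / q) + 16 * (q * X ^ 32) + 8 * M := by
        field_simp; ring
      have u3 : ((M : ℝ) + 1) / (X ^ 32 / M) ≤ N / 8 / X ^ 32 := by
        rw [div_div_eq_mul_div]
        gcongr
        nlinarith
      have u4 : 64 * ((M : ℝ) ^ 2 / q) ≤ N / 4 / X ^ 32 := by
        have h8 : (16 : ℝ) ≤ X ^ 8 := le_trans (by norm_num) (hpow 8)
        calc 64 * ((M : ℝ) ^ 2 / q) ≤ 64 * ((M : ℝ) ^ 2 / X ^ 40) := by gcongr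
          _ = 4 * (16 * M ^ 2) / (X ^ 8 * X ^ 32) := by ring
          _ ≤ 4 * N / (16 * X ^ 32) := by gcongr
          _ = _ := by field_simp; ring
      have u5 : 16 * (q * X ^ 32) ≤ 32 * (M * X ^ 56) := by
        calc 16 * (q * X ^ 32) ≤ 16 * (2 * (M * X ^ 24) * X ^ 32) := by
              gcongr; exact hqD.trans hD2
          _ = _ := by ring
      have u6 : 128 * (M * X ^ 32) + 32 * (M * X ^ 56) + 8 * M ≤ M * X ^ 80 := by
        have a1 : X ^ 32 ≤ X ^ 56 := pow_le_pow_right₀ hX1 (by norm_num)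
        have a2 : 1 ≤ X ^ 56 := one_le_pow₀ hX1
        have a3 : (168 : ℝ) ≤ X ^ 24 := le_trans (by norm_num) (hpow 24)
        calc 128 * (M * X ^ 32) + 32 * (M * X ^ 56) + 8 * M
            = M * (128 * X ^ 32 + 32 * X ^ 56 + 8) := by ring
          _ ≤ M * (168 * X ^ 56) := by gcongr; linarith
          _ ≤ M * (X ^ 24 * X ^ 56) := by gcongr
          _ = _ := by ring
      have u7 := hneg 80 (by norm_num)
      have u8 : (0 : ℝ) < N / X ^ 32 := by positivity
      have v1 : N / 16 / X ^ 32 = N / X ^ 32 / 16 := by ring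
      have v2 : N / 8 / X ^ 32 = N / X ^ 32 / 8 := by ring
      have v3 : N / 4 / X ^ 32 = N / X ^ 32 / 4 := by ring
      norm_num only
      linarith

lemma half_le_log {X : ℝ} (hX : 5 / 3 ≤ X) : 1 / 2 ≤ Real.log X := by
  rw [Real.le_log_iff_exp_le (by linarith)]
  refine le_trans ?_ hX
  have h1 : Real.exp (1 / 2) ^ 2 = Real.exp 1 := by
    rw [← Real.exp_nat_mul]; norm_num
  have h2 := Real.exp_one_lt_d9
  have h3 := Real.exp_pos (1 / 2)
  nlinarith

lemma arcBound_le {N M P H q : ℕ} {X : ℝ} (hX : 5 / 3 ≤ X) (hMN : 16 * (M : ℝ) ^ 2 ≤ N)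
    (hM : X ^ 400 ≤ M) (hP : (P : ℝ) ≤ 4 * N) (hH1 : 1 ≤ H) (hH : (H : ℝ) ≤ 5 * X ^ 20)
    (hq : 1 ≤ q) (hqX : (q : ℝ) ≤ 2 * X ^ 40) :
    arcBound M P H (X ^ 20 / N) q ≤ 220 * Real.log X * N / √q := by
  have hX0 : 0 < X := by linarith
  have hX1 : 1 ≤ X := by linarith
  have hℓ := half_le_log hX
  set ℓ := Real.log X with hℓd
  have hM1 : (1 : ℝ) ≤ M := (one_le_pow₀ hX1).trans hM
  have hN0 : (0 : ℝ) < N := by nlinarith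
  have hpow : ∀ k : ℕ, (5 / 3 : ℝ) ^ k ≤ X ^ k := fun k => by gcongr
  have hq1 : (1 : ℝ) ≤ q := by exact_mod_cast hq
  have hsq1 : 1 ≤ √(q : ℝ) := Real.one_le_sqrt.2 hq1
  have hsqq : √(q : ℝ) ≤ q := by
    rw [Real.sqrt_le_left (by linarith)]; nlinarith
  have hlogH : Real.log H ≤ 24 * ℓ := by
    have h1 : (H : ℝ) ≤ X ^ 24 := by
      have h4 : (5 : ℝ) ≤ X ^ 4 := le_trans (by norm_num) (hpow 4)
      calc (H : ℝ) ≤ 5 * X ^ 20 := hH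
        _ ≤ X ^ 4 * X ^ 20 := by gcongr
        _ = _ := by ring
    calc Real.log H ≤ Real.log (X ^ 24) := Real.log_le_log (by exact_mod_cast hH1) h1
      _ = 24 * ℓ := by rw [Real.log_pow, ← hℓd]; norm_num
  have t1 : 2 * ((M : ℝ) * (M + 1)) + P * (1 + Real.log H) ≤ 105 * ℓ * N := by
    have a1 : 2 * ((M : ℝ) * (M + 1)) ≤ N / 4 := by nlinarith
    have a2 : (P : ℝ) * (1 + Real.log H) ≤ 4 * N * (26 * ℓ) := by
      have := Real.log_natCast_nonneg H
      gcongr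
      linarith
    nlinarith
  have t2 : (M : ℝ) ^ 2 * (X ^ 20 / N) ≤ X ^ 20 := by
    rw [mul_div_assoc', div_le_iff₀ hN0, mul_comm]
    gcongr
    nlinarith [sq_nonneg (M : ℝ)]
  have p20 : 1 ≤ X ^ 20 := one_le_pow₀ hX1
  have t3 : 2 * ((H : ℝ) + 1) * (100 * q * M * (1 + M ^ 2 * (X ^ 20 / N))) ≤
      5 * N / √q := by
    rw [le_div_iff₀ (by positivity)]
    calc 2 * ((H : ℝ) + 1) * (100 * q * M * (1 + M ^ 2 * (X ^ 20 / N))) * √q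
        ≤ 2 * (6 * X ^ 20) * (100 * q * M * (2 * X ^ 20)) * q := by
          gcongr <;> linarith
      _ = 2400 * X ^ 40 * M * (q : ℝ) ^ 2 := by ring
      _ ≤ 2400 * X ^ 40 * M * (2 * X ^ 40) ^ 2 := by gcongr
      _ = 9600 * X ^ 120 * M := by ring
      _ ≤ X ^ 20 * X ^ 120 * M := by
          gcongr; exact le_trans (by norm_num) (hpow 20)
      _ = X ^ 140 * M := by ring
      _ ≤ X ^ 400 * M := by gcongr; norm_num
      _ ≤ M * M := by gcongr
      _ ≤ 5 * N := by nlinarith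
  calc arcBound M P H (X ^ 20 / N) q ≤ 2 / √q * (105 * ℓ * N) + 5 * N / √q := by
        unfold arcBound; gcongr
    _ = (210 * ℓ * N + 5 * N) / √q := by ring
    _ ≤ _ := by gcongr; nlinarith

lemma exists_quarter_sqrt {N : ℕ} {X : ℝ} (hX : 5 / 3 ≤ X) (hN : X ^ 1000 ≤ N) :
    ∃ M : ℕ, 16 * (M : ℝ) ^ 2 ≤ N ∧ (N : ℝ) ≤ 64 * (M : ℝ) ^ 2 ∧ X ^ 400 ≤ M := by
  have hX0 : 0 < X := by linarith
  have hX1 : 1 ≤ X := by linarith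
  have hpow : ∀ k : ℕ, (5 / 3 : ℝ) ^ k ≤ X ^ k := fun k => by gcongr
  have hN16 : 16 ≤ N := by
    have h8 : (16 : ℝ) ≤ X ^ 1000 :=
      (le_trans (by norm_num) (hpow 8)).trans (pow_le_pow_right₀ hX1 (by norm_num))
    exact_mod_cast h8.trans hN
  set s := Nat.sqrt N with hs
  have h1 : s * s ≤ N := Nat.sqrt_le N
  have h2 : N < (s + 1) * (s + 1) := Nat.lt_succ_sqrt N
  have h4 : 4 ≤ s := Nat.le_sqrt.2 hN16
  set M := s / 4 with hM
  have hM1 : 4 * M ≤ s := Nat.mul_div_le s 4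
  have hM2 : s + 1 ≤ 4 * M + 4 := by omega
  have hM3 : 1 ≤ M := by omega
  have h16 : 16 * M ^ 2 ≤ N := by nlinarith
  have h64 : N ≤ 64 * M ^ 2 := by nlinarith
  have h64' : (N : ℝ) ≤ 64 * (M : ℝ) ^ 2 := by exact_mod_cast h64
  refine ⟨M, by exact_mod_cast h16, h64', ?_⟩
  refine le_of_sq_le_sq ?_ (Nat.cast_nonneg _)
  have e : (64 : ℝ) * (X ^ 400) ^ 2 ≤ X ^ 1000 := by
    calc (64 : ℝ) * (X ^ 400) ^ 2 ≤ X ^ 200 * (X ^ 400) ^ 2 := by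
          gcongr
          exact (le_trans (by norm_num) (hpow 9)).trans (pow_le_pow_right₀ hX1 (by norm_num))
      _ = _ := by ring
  linarith

set_option maxHeartbeats 1000000 in
/-- The main Fourier-analytic estimate: if no density increment on progressions is available,
there is a lot of Fourier mass near rationals with small denominator. -/
lemma NoSquareDiff.sq_card_le_sum_div_sqrt {A : Finset ℕ} (hA : NoSquareDiff A) {N n K : ℕ}
    {X ν : ℝ} (hX : 5 / 3 ≤ X) (hAN : A ⊆ Finset.Icc 1 N) (hcard : A.card * X = N)
    (hN : X ^ 1000 ≤ N) (hν0 : 0 < ν) (hν1 : ν ≤ 1) (hν : ν * Real.log X ≤ 1 / 10 ^ 7)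
    (hn : 0 < n) (hnN : n * X ^ 150 ≤ 2 * ν * N)
    (hD : SquareDiffBound n ((1 + ν / 20) / X * n)) (hK : X ^ 40 ≤ K)
    (hK' : (K : ℝ) ≤ 2 * X ^ 40) :
    ∃ γ : ℚ → ℝ, (∀ x, 0 < x → x ≤ 1 → γ x ∈ Set.Ioc (0 : ℝ) 1 ∧ |γ x - x| ≤ X ^ 20 / N) ∧
      (A.card : ℝ) ^ 2 ≤ 56320 * Real.log X *
        ∑ x ∈ (farey K).filter (fun x => 0 < x ∧ x < 1), ‖hatInd A (γ x)‖ ^ 2 / √x.den := by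
  have hX0 : 0 < X := by linarith
  have hX1 : 1 ≤ X := by linarith
  have hℓ := half_le_log hX
  have hℓX : Real.log X ≤ X := (Real.log_le_sub_one_of_pos hX0).trans (by linarith)
  have hpow : ∀ k : ℕ, (5 / 3 : ℝ) ^ k ≤ X ^ k := fun k => by gcongr
  have hmono : ∀ {j k : ℕ}, j ≤ k → X ^ j ≤ X ^ k := fun h => pow_le_pow_right₀ hX1 h
  have hN0 : (0 : ℝ) < N := lt_of_lt_of_le (by positivity) hN
  obtain ⟨M, hMN, hNM, hMX⟩ := exists_quarter_sqrt hX hN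
  have hM1 : (1 : ℝ) ≤ M := (one_le_pow₀ hX1).trans hMX
  set S : ℝ := (A.card : ℝ) with hS
  have hS0 : 0 < S := by nlinarith
  set a : ℝ := (1 + ν / 20) / X with ha
  have ha0 : 0 ≤ a := by positivity
  have haX : a * X = 1 + ν / 20 := by rw [ha]; field_simp
  have ha1 : a ≤ 1 := by rw [ha, div_le_one hX0]; linarith
  have hXa : 1 / X ≤ a := by rw [ha]; gcongr; linarith
  -- the length `n` is much smaller than `N`
  have hv : 100 * (n * X ^ 20) ≤ ν * N := by
    have h1 : (200 : ℝ) * X ^ 20 ≤ X ^ 150 := by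
      calc (200 : ℝ) * X ^ 20 ≤ X ^ 12 * X ^ 20 := by
            gcongr; exact le_trans (by norm_num) (hpow 12)
        _ = X ^ 32 := by ring
        _ ≤ _ := hmono (by norm_num)
    have hnr : (0 : ℝ) < n := by exact_mod_cast hn
    nlinarith
  have p20 : 1 ≤ X ^ 20 := one_le_pow₀ hX1
  have hnr : (0 : ℝ) < n := by exact_mod_cast hn
  have hv1 : 100 * (n : ℝ) ≤ ν * N := by nlinarith
  have hv2 : 100 * (n : ℝ) ≤ N := by nlinarith
  set J : ℕ := N / n + 1 with hJ
  have hT1 : N < J * n := by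
    have := Nat.lt_div_mul_add (a := N) hn
    rw [hJ, add_mul, one_mul]; exact this
  have hT2 : J * n ≤ N + n := by
    rw [hJ, add_mul, one_mul]
    exact Nat.add_le_add_right (Nat.div_mul_le_self N n) n
  have hT1' : (N : ℝ) ≤ (J * n : ℕ) := by exact_mod_cast hT1.le
  have hT2' : ((J * n : ℕ) : ℝ) ≤ N + n := by exact_mod_cast hT2
  have hAT : A ⊆ Finset.range (J * n) := fun x hx =>
    Finset.mem_range.2 (lt_of_le_of_lt (Finset.mem_Icc.1 (hAN hx)).2 hT1)
  have hMT : M ^ 2 ≤ J * n := by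
    have : ((M ^ 2 : ℕ) : ℝ) ≤ (J * n : ℕ) := by push_cast at hT1' ⊢; nlinarith
    exact_mod_cast this
  set T : ℝ := ((J * n : ℕ) : ℝ) with hT
  have haT : a * T ≤ S * (1 + ν / 10) := by
    have h1 : a * T ≤ a * (N + n) := by gcongr
    have h2 : a * N = S * (1 + ν / 20) := by rw [← hcard, ← haX]; ring
    have h3 : a * n ≤ S * (ν * (1 + ν / 20)) / 100 := by
      have : a * (100 * n) ≤ a * (ν * N) := by gcongr
      have e : a * (ν * N) = S * (ν * (1 + ν / 20)) := by rw [← haX, ← hcard]; ring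
      linarith
    have h4 : S * (ν * (1 + ν / 20)) ≤ S * (2 * ν) :=
      mul_le_mul_of_nonneg_left (by nlinarith) hS0.le
    linarith [mul_pos hS0 hν0]
  have hSν : S * (ν / 10) ≤ S := by nlinarith
  have hT4 : T ≤ 2 * N := by linarith
  set H : ℕ := ⌈4 * X ^ 20⌉₊ with hHd
  have hH1 : 4 * X ^ 20 ≤ H := Nat.le_ceil _
  have hH2 : (H : ℝ) ≤ 5 * X ^ 20 := by
    have := (Nat.ceil_lt_add_one (by positivity : 0 ≤ 4 * X ^ 20)).le
    linarith
  have hH3 : 1 ≤ H := Nat.ceil_pos.2 (by positivity)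
  have hP : ((2 * (J * n) : ℕ) : ℝ) = 2 * T := by rw [hT]; push_cast; ring
  have hP4 : ((2 * (J * n) : ℕ) : ℝ) ≤ 4 * N := by rw [hP]; linarith
  have hK1 : (1 : ℝ) ≤ K := (one_le_pow₀ hX1).trans hK
  have hKX : 2 * K * (X ^ 20 / N) ≤ 1 := by
    rw [mul_div_assoc', div_le_one hN0]
    calc 2 * K * X ^ 20 ≤ 2 * (2 * X ^ 40) * X ^ 20 := by gcongr
      _ = 4 * X ^ 60 := by ring
      _ ≤ X ^ 4 * X ^ 60 := by gcongr; exact le_trans (by norm_num) (hpow 4)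
      _ = X ^ 64 := by ring
      _ ≤ X ^ 1000 := hmono (by norm_num)
      _ ≤ N := hN
  have hκH : X ^ 20 / N * (2 * (J * n) : ℕ) ≤ H := by
    refine le_trans ?_ hH1
    rw [div_mul_eq_mul_div, div_le_iff₀ hN0]
    calc X ^ 20 * ((2 * (J * n) : ℕ) : ℝ) ≤ X ^ 20 * (4 * N) := by gcongr
      _ = _ := by ring
  obtain ⟨γ, hγ, hmain⟩ := hA.card_le_sum_major_arcs hn ha0 hD hAT (Nat.succ_pos _) hMT
    (K := K) (H := H) (κ := X ^ 20 / N) (E := N / X ^ 16) (by positivity)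
    (by exact_mod_cast hK1) (by positivity) hKX hκH
    (fun γ h0 h1 => norm_sqSum_le_or_near_rat hX hMN hMX hK hK' h0 h1)
  refine ⟨γ, hγ, ?_⟩
  rw [← hS, ← hT, hP] at hmain
  set ℓ := Real.log X with hℓd
  set F := (farey K).filter (fun x => 0 < x ∧ x < 1) with hF
  have harc : ∀ q : ℕ, 1 ≤ q → q ≤ K →
      arcBound M (2 * (J * n)) H (X ^ 20 / N) q ≤ 220 * ℓ * N / √q := fun q hq hqK =>
    arcBound_le hX hMN hMX hP4 hH3 hH2 hq (le_trans (by exact_mod_cast hqK) hK')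
  have harc1 : arcBound M (2 * (J * n)) H (X ^ 20 / N) 1 ≤ 220 * ℓ * N := by
    have := harc 1 le_rfl (by exact_mod_cast hK1)
    simpa using this
  -- the main term
  have hgood : S / 2 ≤ ((A.filter fun y => y + M ^ 2 < J * n).card : ℝ) := by
    have h1 := hA.card_tail_le hn hD (K := M ^ 2) hAT
    have h2 : (((A.filter fun y => y + M ^ 2 < J * n).card : ℕ) : ℝ) +
        ((A.filter fun y => ¬ y + M ^ 2 < J * n).card : ℝ) = S := by
      rw [hS]; exact_mod_cast Finset.card_filter_add_card_filter_not _
    have h3 : (((M ^ 2 / n + 1 : ℕ)) : ℝ) * (a * n) ≤ a * (M ^ 2 + n) := by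
      have h4 : ((M ^ 2 / n * n : ℕ) : ℝ) ≤ ((M ^ 2 : ℕ) : ℝ) :=
        Nat.cast_le.2 (Nat.div_mul_le_self _ _)
      push_cast at h4 ⊢
      calc (((M ^ 2 / n : ℕ) : ℝ) + 1) * (a * n) = a * (((M ^ 2 / n : ℕ) : ℝ) * n + n) := by ring
        _ ≤ _ := by gcongr
    have h5 : a * ((M : ℝ) ^ 2 + n) ≤ a * (T * (1 / 10)) := by gcongr; linarith
    linarith
  have hlow : N * S ^ 2 / 64 ≤ 2 * T * (a * (M * (M + 1)) *
      (A.filter fun y => y + M ^ 2 < J * n).card) := by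
    calc N * S ^ 2 / 64 = 2 * N * (1 / X * (N / 64) * (S / 2)) := by
          rw [← hcard]; field_simp
      _ ≤ _ := by
          gcongr
          nlinarith
  -- minor arcs
  have hmin : N / X ^ 16 * (2 * T * (a ^ 2 * T + 2 * S)) ≤ N * S ^ 2 / 128 := by
    have h1 : a ^ 2 * T ≤ 2 * S := by
      have : a * (a * T) ≤ 1 * (a * T) := by gcongr
      linarith
    have h15 : (2048 : ℝ) ≤ X ^ 15 := le_trans (by norm_num) (hpow 15)
    have h2 : N / X ^ 16 ≤ S / 2048 := by
      rw [div_le_div_iff₀ (by positivity) (by norm_num), ← hcard]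
      calc S * X * 2048 ≤ S * X * X ^ 15 := by gcongr
        _ = _ := by ring
    calc N / X ^ 16 * (2 * T * (a ^ 2 * T + 2 * S)) ≤
          S / 2048 * (2 * (2 * N) * (2 * S + 2 * S)) := by gcongr
      _ = _ := by ring
  -- arcs around the integers
  have hint : 2 * (((a * T - S) + 2 * Real.pi * (n * (X ^ 20 / N)) * (a * T + S)) * S *
      arcBound M (2 * (J * n)) H (X ^ 20 / N) 1) ≤ N * S ^ 2 / 512 := by
    have h1 : n * (X ^ 20 / N) ≤ ν / 100 := by
      rw [mul_div_assoc', div_le_iff₀ hN0]; linarith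
    have h2 : a * T + S ≤ 3 * S := by linarith
    have hpi := Real.pi_lt_four
    have hpi0 := Real.pi_pos
    have h3 : (a * T - S) + 2 * Real.pi * (n * (X ^ 20 / N)) * (a * T + S) ≤ ν * S := by
      calc _ ≤ S * (ν / 10) + 2 * 4 * (ν / 100) * (3 * S) := by
            gcongr
            linarith
        _ ≤ ν * S := by linarith [mul_pos hS0 hν0]
    have h4 := arcBound_nonneg M (2 * (J * n)) H (by positivity : 0 ≤ X ^ 20 / N) 1
    calc _ ≤ 2 * (ν * S * S * (220 * ℓ * N)) := by gcongr
      _ = 440 * N * S ^ 2 * (ν * ℓ) := by ring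
      _ ≤ 440 * N * S ^ 2 * (1 / 10 ^ 7) := by gcongr
      _ ≤ _ := by
        have : 0 < N * S ^ 2 := by positivity
        linarith
  -- the remaining arcs
  have hfar : ∑ x ∈ F, (‖hatInd A (γ x)‖ ^ 2 + a * K * S) *
      arcBound M (2 * (J * n)) H (X ^ 20 / N) x.den ≤
      220 * ℓ * N * ∑ x ∈ F, ‖hatInd A (γ x)‖ ^ 2 / √x.den + N * S ^ 2 / 512 := by
    have hpt : ∀ x ∈ F, (‖hatInd A (γ x)‖ ^ 2 + a * K * S) *
        arcBound M (2 * (J * n)) H (X ^ 20 / N) x.den ≤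
        220 * ℓ * N * (‖hatInd A (γ x)‖ ^ 2 / √x.den) + 2 * X ^ 40 * S * (220 * X * N) := by
      intro x hx
      have hxK := (mem_farey.1 (Finset.mem_filter.1 hx).1).2.2
      have h1 := harc x.den x.pos hxK
      have h2 : 1 ≤ √(x.den : ℝ) := Real.one_le_sqrt.2 (by exact_mod_cast x.pos)
      calc _ ≤ (‖hatInd A (γ x)‖ ^ 2 + a * K * S) * (220 * ℓ * N / √x.den) := by gcongr
        _ = 220 * ℓ * N * (‖hatInd A (γ x)‖ ^ 2 / √x.den) +
            a * K * S * (220 * ℓ * N / √x.den) := by ring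
        _ ≤ 220 * ℓ * N * (‖hatInd A (γ x)‖ ^ 2 / √x.den) +
            1 * (2 * X ^ 40) * S * (220 * X * N / 1) := by gcongr
        _ = _ := by ring
    refine (Finset.sum_le_sum hpt).trans ?_
    rw [Finset.sum_add_distrib, ← Finset.mul_sum, Finset.sum_const, nsmul_eq_mul]
    refine add_le_add le_rfl ?_
    have hc : (F.card : ℝ) ≤ (3 * X ^ 40) ^ 2 := by
      have h1 : (F.card : ℝ) ≤ ((K + 1) ^ 2 : ℕ) :=
        Nat.cast_le.2 ((Finset.card_filter_le _ _).trans (card_farey_le K))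
      have h2 : 1 ≤ X ^ 40 := one_le_pow₀ hX1
      refine h1.trans ?_
      push_cast
      gcongr
      linarith
    have hSX : X ^ 400 ≤ S := by
      have : X ^ 400 * X ≤ S * X := by
        rw [hcard]
        calc X ^ 400 * X = X ^ 401 := by ring
          _ ≤ X ^ 1000 := hmono (by norm_num)
          _ ≤ N := hN
      exact le_of_mul_le_mul_right this hX0
    calc (F.card : ℝ) * (2 * X ^ 40 * S * (220 * X * N))
        ≤ (3 * X ^ 40) ^ 2 * (2 * X ^ 40 * S * (220 * X * N)) := by gcongr
      _ = N * S * (2027520 * X ^ 121) / 512 := by ring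
      _ ≤ N * S * (X ^ 50 * X ^ 121) / 512 := by
          gcongr; exact le_trans (by norm_num) (hpow 50)
      _ = N * S * X ^ 171 / 512 := by ring
      _ ≤ N * S * X ^ 400 / 512 := by gcongr; norm_num
      _ ≤ N * S * S / 512 := by gcongr
      _ = _ := by ring
  have hfin : N * S ^ 2 / 256 ≤ 220 * ℓ * N * ∑ x ∈ F, ‖hatInd A (γ x)‖ ^ 2 / √x.den := by
    linarith
  have : N * S ^ 2 ≤ N * (56320 * ℓ * ∑ x ∈ F, ‖hatInd A (γ x)‖ ^ 2 / √x.den) := by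
    linarith
  exact le_of_mul_le_mul_left this hN0

/-! ### Extracting a popular scale -/

lemma exists_dyadic_scale (F : Finset ℚ) (f : ℚ → ℝ) {S : ℝ} {K L : ℕ}
    (hf0 : ∀ x ∈ F, 0 < f x) (hfS : ∀ x ∈ F, f x ≤ S) (hfL : ∀ x ∈ F, S ≤ L * f x)
    (hK : ∀ x ∈ F, x.den ≤ K) :
    ∃ i ≤ Nat.log 2 L, ∃ j ≤ Nat.log 2 K, ∃ G ⊆ F,
      (∀ x ∈ G, x.den ≤ 2 ^ (j + 1) ∧ S < 2 ^ (i + 1) * f x) ∧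
      (∑ x ∈ F, f x ^ 2 / √x.den) * (2 ^ (i + 1) * √(2 ^ (j + 1) : ℝ)) ≤
        4 * S * ((Nat.log 2 K + 1) * (Nat.log 2 L + 1)) * ∑ x ∈ G, f x := by
  set t := Finset.range (Nat.log 2 K + 1) ×ˢ Finset.range (Nat.log 2 L + 1) with ht
  set φ : ℚ → ℕ × ℕ := fun x => (Nat.log 2 x.den, Nat.log 2 ⌊S / f x⌋₊) with hφ
  have hmaps : ∀ x ∈ F, φ x ∈ t := by
    intro x hx
    simp only [hφ, ht, Finset.mem_product, Finset.mem_range, Nat.lt_succ_iff]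
    refine ⟨Nat.log_mono_right (hK x hx), Nat.log_mono_right ?_⟩
    refine Nat.floor_le_of_le ?_
    rw [div_le_iff₀ (hf0 x hx)]
    exact hfL x hx
  have htc : (t.card : ℝ) = (Nat.log 2 K + 1) * (Nat.log 2 L + 1) := by
    rw [ht, Finset.card_product, Finset.card_range, Finset.card_range]; push_cast; ring
  have htpos : (0 : ℝ) < t.card := by rw [htc]; positivity
  obtain ⟨y, hy, hsum⟩ := Finset.exists_le_sum_fiber_of_maps_to_of_nsmul_le_sum
    (w := fun x => f x ^ 2 / √x.den) (b := (∑ x ∈ F, f x ^ 2 / √x.den) / t.card) hmaps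
    (Finset.card_pos.1 (by exact_mod_cast htpos))
    (by rw [nsmul_eq_mul, mul_div_cancel₀ _ htpos.ne'])
  obtain ⟨j, i⟩ := y
  simp only [ht, Finset.mem_product, Finset.mem_range, Nat.lt_succ_iff] at hy
  refine ⟨i, hy.2, j, hy.1, F.filter fun x => φ x = (j, i), Finset.filter_subset _ _, ?_, ?_⟩
  · intro x hx
    obtain ⟨hxF, hxφ⟩ := Finset.mem_filter.1 hx
    obtain ⟨rfl, rfl⟩ := Prod.ext_iff.1 hxφ
    refine ⟨(Nat.lt_pow_succ_log_self one_lt_two _).le, ?_⟩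
    rw [← div_lt_iff₀ (hf0 x hxF)]
    have := (Nat.floor_lt' (by positivity)).1 (Nat.lt_pow_succ_log_self one_lt_two ⌊S / f x⌋₊)
    exact_mod_cast this
  · rw [div_le_iff₀ htpos, htc] at hsum
    have hpt : ∀ x ∈ F.filter (fun x => φ x = (j, i)),
        f x ^ 2 / √x.den * (2 ^ (i + 1) * √(2 ^ (j + 1) : ℝ)) ≤ 4 * S * f x := by
      intro x hx
      obtain ⟨hxF, hxφ⟩ := Finset.mem_filter.1 hx
      obtain ⟨rfl, rfl⟩ := Prod.ext_iff.1 hxφ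
      have hfx := hf0 x hxF
      have hS : 0 ≤ S := hfx.le.trans (hfS x hxF)
      have hd : (0 : ℝ) < x.den := by exact_mod_cast x.pos
      have h1 : √((2 : ℝ) ^ (Nat.log 2 x.den + 1)) ≤ 2 * √x.den := by
        rw [Real.sqrt_le_left (by positivity), mul_pow, Real.sq_sqrt hd.le, pow_succ]
        have : ((2 ^ Nat.log 2 x.den : ℕ) : ℝ) ≤ x.den :=
          Nat.cast_le.2 (Nat.pow_log_le_self 2 x.pos.ne')
        push_cast at this
        linarith
      have h2 : (2 : ℝ) ^ (Nat.log 2 ⌊S / f x⌋₊ + 1) * f x ≤ 2 * S := by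
        have h3 : 1 ≤ ⌊S / f x⌋₊ := Nat.one_le_floor_iff _ |>.2 ((one_le_div hfx).2 (hfS x hxF))
        have h4 : ((2 ^ Nat.log 2 ⌊S / f x⌋₊ : ℕ) : ℝ) ≤ ⌊S / f x⌋₊ :=
          Nat.cast_le.2 (Nat.pow_log_le_self 2 (by omega))
        have h5 := h4.trans (Nat.floor_le (by positivity))
        rw [le_div_iff₀ hfx] at h5
        push_cast at h5
        rw [pow_succ]
        linarith
      calc f x ^ 2 / √x.den * (2 ^ (Nat.log 2 ⌊S / f x⌋₊ + 1) * √(2 ^ (Nat.log 2 x.den + 1) : ℝ))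
          = f x * (2 ^ (Nat.log 2 ⌊S / f x⌋₊ + 1) * f x) *
            √((2 : ℝ) ^ (Nat.log 2 x.den + 1)) / √x.den := by ring
        _ ≤ f x * (2 * S) * (2 * √x.den) / √x.den := by gcongr
        _ = 4 * S * f x := by field_simp; ring
    calc (∑ x ∈ F, f x ^ 2 / √x.den) * (2 ^ (i + 1) * √(2 ^ (j + 1) : ℝ))
        ≤ (∑ x ∈ F.filter (fun x => φ x = (j, i)), f x ^ 2 / √x.den) *
          ((Nat.log 2 K + 1) * (Nat.log 2 L + 1)) * (2 ^ (i + 1) * √(2 ^ (j + 1) : ℝ)) := by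
          gcongr
      _ = ((Nat.log 2 K + 1) * (Nat.log 2 L + 1)) *
          ∑ x ∈ F.filter (fun x => φ x = (j, i)),
            f x ^ 2 / √x.den * (2 ^ (i + 1) * √(2 ^ (j + 1) : ℝ)) := by
          rw [← Finset.sum_mul]; ring
      _ ≤ ((Nat.log 2 K + 1) * (Nat.log 2 L + 1)) *
          ∑ x ∈ F.filter (fun x => φ x = (j, i)), 4 * S * f x := by
          exact mul_le_mul_of_nonneg_left (Finset.sum_le_sum hpt) (by positivity)
      _ = _ := by rw [← Finset.mul_sum]; ring

lemma natLog_two_add_one_le {n k : ℕ} {X : ℝ} (hX : 5 / 3 ≤ X) (hn0 : 1 ≤ n)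
    (hn : (n : ℝ) ≤ X ^ k) : (Nat.log 2 n : ℝ) + 1 ≤ (2 * k + 2) * Real.log X := by
  have hℓ := half_le_log hX
  have h1 : (Nat.log 2 n : ℝ) * Real.log 2 ≤ Real.log n := by
    rw [← Real.log_pow]
    refine Real.log_le_log (by positivity) ?_
    exact_mod_cast Nat.pow_log_le_self 2 (by omega)
  have h2 : Real.log n ≤ k * Real.log X := by
    rw [← Real.log_pow]
    exact Real.log_le_log (by exact_mod_cast hn0) hn
  have h3 := Real.log_two_gt_d9
  have h4 : (0 : ℝ) ≤ Nat.log 2 n := Nat.cast_nonneg _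
  nlinarith

/-- Without a density increment, there are few large Fourier coefficients near the rationals of a
given denominator. -/
lemma NoSquareDiff.card_filter_den_le {A : Finset ℕ} (hA : NoSquareDiff A) {N n q : ℕ}
    {X ν B : ℝ} (hX : 5 / 3 ≤ X) (hAN : A ⊆ Finset.Icc 1 N) (hcard : A.card * X = N)
    (hN0 : 0 < N) (hν0 : 0 < ν) (hν1 : ν ≤ 1) (hn : 0 < n) (hnN : n * X ^ 150 ≤ 2 * ν * N)
    (hD : SquareDiffBound n ((1 + ν / 20) / X * n)) (hq : 1 ≤ q) (hqX : (q : ℝ) ≤ 2 * X ^ 40)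
    (hB : 0 < B) (G : Finset ℚ) (γ : ℚ → ℝ) (hG : ∀ x ∈ G, 0 < x ∧ x < 1 ∧
      |γ x - x| ≤ X ^ 20 / N ∧ A.card < B * ‖hatInd A (γ x)‖) :
    ((G.filter fun x => x.den = q).card : ℝ) ≤ ν * B ^ 2 := by
  have hX0 : 0 < X := by linarith
  have hX1 : 1 ≤ X := by linarith
  have hpow : ∀ k : ℕ, (5 / 3 : ℝ) ^ k ≤ X ^ k := fun k => by gcongr
  have hNr : (0 : ℝ) < N := by exact_mod_cast hN0
  set S : ℝ := (A.card : ℝ) with hS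
  have hS0 : 0 < S := by nlinarith
  set L := q ^ 2 * n with hL
  have hLpos : 0 < L := by positivity
  have hJ : ∀ x ∈ A, x / L < N / L + 1 := fun x hx =>
    Nat.lt_succ_of_le (Nat.div_le_div_right (Finset.mem_Icc.1 (hAN hx)).2)
  have hmain := hA.sum_norm_sq_hatInd_near_le hn hD hq hJ (G.filter fun x => x.den = q)
    (fun x hx => by
      obtain ⟨h1, h2⟩ := Finset.mem_filter.1 hx
      exact ⟨h2, (hG x h1).1, (hG x h1).2.1⟩) γ
    (fun x hx => (hG x (Finset.mem_filter.1 hx).1).2.2.1)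
  rw [← hS] at hmain
  have hLr : (L : ℝ) = q ^ 2 * n := by rw [hL]; push_cast; ring
  rw [← hLr] at hmain
  have hLN : 1000 * (L * X ^ 40) ≤ ν * N := by
    rw [hLr]
    have h1 : 8000 * X ^ 120 ≤ X ^ 150 := by
      calc 8000 * X ^ 120 ≤ X ^ 30 * X ^ 120 := by
            gcongr; exact le_trans (by norm_num) (hpow 30)
        _ = _ := by ring
    calc 1000 * ((q : ℝ) ^ 2 * n * X ^ 40) ≤ 1000 * ((2 * X ^ 40) ^ 2 * n * X ^ 40) := by gcongr
      _ = n * (8000 * X ^ 120) / 2 := by ring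
      _ ≤ n * X ^ 150 / 2 := by gcongr
      _ ≤ _ := by linarith
  have p40 : 1 ≤ X ^ 40 := one_le_pow₀ hX1
  have hLr0 : (0 : ℝ) < L := by exact_mod_cast hLpos
  have hLN1 : 1000 * (L : ℝ) ≤ ν * N := by nlinarith
  have hJL : ((N / L + 1 : ℕ) : ℝ) * L ≤ N + L := by
    have : (N / L + 1) * L ≤ N + L := by
      rw [add_mul, one_mul]; exact Nat.add_le_add_right (Nat.div_mul_le_self N L) L
    exact_mod_cast this
  have t1 : ((N / L + 1 : ℕ) : ℝ) * (q ^ 2 * ((1 + ν / 20) / X * n)) * S - S ^ 2 ≤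
      ν * S ^ 2 / 10 := by
    have e1 : ((N / L + 1 : ℕ) : ℝ) * (q ^ 2 * ((1 + ν / 20) / X * n)) * S =
        (((N / L + 1 : ℕ) : ℝ) * L) * ((1 + ν / 20) / X * S) := by rw [hLr]; ring
    have e2 : (N + L) * ((1 + ν / 20) / X * S) ≤ (N + ν * N / 1000) * ((1 + ν / 20) / X * S) := by
      gcongr; linarith
    have e3 : (N + ν * N / 1000) * ((1 + ν / 20) / X * S) =
        S ^ 2 * ((1 + ν / 1000) * (1 + ν / 20)) := by
      rw [← hcard]; field_simp
    have e4 : ((N / L + 1 : ℕ) : ℝ) * L * ((1 + ν / 20) / X * S) ≤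
        (N + L) * ((1 + ν / 20) / X * S) := by gcongr
    have e5 : S ^ 2 * ((1 + ν / 1000) * (1 + ν / 20)) ≤ S ^ 2 * (1 + ν / 10) := by
      gcongr; nlinarith
    rw [e1]
    linarith
  have t2 : 2 * q * (2 * Real.pi * (L * (X ^ 20 / N)) * S) ^ 2 ≤ ν * S ^ 2 / 10 := by
    have h1 : L * (X ^ 20 / N) ≤ ν / (1000 * X ^ 20) := by
      rw [mul_div_assoc', div_le_div_iff₀ hNr (by positivity)]
      calc L * X ^ 20 * (1000 * X ^ 20) = 1000 * (L * X ^ 40) := by ring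
        _ ≤ _ := hLN
    have hpi := Real.pi_lt_four.le
    have hpi0 := Real.pi_pos
    calc 2 * q * (2 * Real.pi * (L * (X ^ 20 / N)) * S) ^ 2
        ≤ 2 * (2 * X ^ 40) * (2 * 4 * (ν / (1000 * X ^ 20)) * S) ^ 2 := by gcongr
      _ = ν * S ^ 2 * ν * (256 / 10 ^ 6) := by field_simp; ring
      _ ≤ ν * S ^ 2 * 1 * (256 / 10 ^ 6) := by gcongr
      _ ≤ _ := by
        have : 0 < ν * S ^ 2 := by positivity
        linarith
  have hlow : ((G.filter fun x => x.den = q).card : ℝ) * (S / B) ^ 2 ≤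
      ∑ x ∈ G.filter fun x => x.den = q, ‖hatInd A (γ x)‖ ^ 2 := by
    rw [← nsmul_eq_mul]
    refine Finset.card_nsmul_le_sum _ _ _ fun x hx => ?_
    have := (hG x (Finset.mem_filter.1 hx).1).2.2.2.le
    gcongr
    rw [div_le_iff₀ hB]; linarith
  have hfin : ((G.filter fun x => x.den = q).card : ℝ) * (S / B) ^ 2 ≤ ν * S ^ 2 := by
    have : 0 < ν * S ^ 2 := by positivity
    linarith
  rw [div_pow, mul_div_assoc', div_le_iff₀ (by positivity)] at hfin
  have : S ^ 2 * ((G.filter fun x => x.den = q).card : ℝ) ≤ S ^ 2 * (ν * B ^ 2) := by linarith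
  exact le_of_mul_le_mul_left this (by positivity)

lemma NoSquareDiff.two_mul_card_le {A : Finset ℕ} (hA : NoSquareDiff A) {N : ℕ}
    (hAN : A ⊆ Finset.Icc 1 N) : 2 * A.card ≤ N + 1 := by
  have hdisj : Disjoint A (A.image (· + 1)) := by
    rw [Finset.disjoint_left]
    rintro a ha h
    obtain ⟨b, hb, rfl⟩ := Finset.mem_image.1 h
    exact hA _ ha b hb 1 one_pos rfl
  have hsub : A ∪ A.image (· + 1) ⊆ Finset.Icc 1 (N + 1) := by
    intro a ha
    rcases Finset.mem_union.1 ha with h | h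
    · have := Finset.mem_Icc.1 (hAN h)
      exact Finset.mem_Icc.2 (by omega)
    · obtain ⟨b, hb, rfl⟩ := Finset.mem_image.1 h
      have := Finset.mem_Icc.1 (hAN hb)
      exact Finset.mem_Icc.2 (by omega)
  have h := Finset.card_le_card hsub
  rw [Finset.card_union_of_disjoint hdisj,
    Finset.card_image_of_injective _ (add_left_injective 1), Nat.card_Icc] at h
  omega

/-- Discarding the small Fourier coefficients costs at most half of the weighted second moment. -/
lemma sq_le_mul_sum_filter_large {X S : ℝ} {K L : ℕ} (hX : 5 / 3 ≤ X) (hS : 0 < S)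
    (hK : (K : ℝ) ≤ 2 * X ^ 40) (hL : X ^ 60 ≤ L) {F : Finset ℚ} (hF : F.card ≤ (K + 1) ^ 2)
    (f : ℚ → ℝ) (hf : ∀ x ∈ F, 0 ≤ f x)
    (h : S ^ 2 ≤ 56320 * Real.log X * ∑ x ∈ F, f x ^ 2 / √x.den) :
    S ^ 2 ≤ 112640 * Real.log X * ∑ x ∈ F.filter (fun x => S ≤ L * f x), f x ^ 2 / √x.den := by
  have hX0 : 0 < X := by linarith
  have hℓ := half_le_log hX
  have hsmall : ∑ x ∈ F.filter (fun x => ¬ S ≤ L * f x), f x ^ 2 / √x.den ≤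
      9 * S ^ 2 / X ^ 40 := by
    have hpt : ∀ x ∈ F.filter (fun x => ¬ S ≤ L * f x),
        f x ^ 2 / √x.den ≤ S ^ 2 / X ^ 120 := by
      intro x hx
      obtain ⟨hxF, hxS⟩ := Finset.mem_filter.1 hx
      have hd : (1 : ℝ) ≤ √x.den := Real.one_le_sqrt.2 (by exact_mod_cast x.pos)
      have h1 : X ^ 60 * f x ≤ S :=
        (mul_le_mul_of_nonneg_right hL (hf x hxF)).trans (not_le.1 hxS).le
      have h2 : f x ≤ S / X ^ 60 := by
        rw [le_div_iff₀ (by positivity)]; linarith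
      calc f x ^ 2 / √x.den ≤ f x ^ 2 := div_le_self (by positivity) hd
        _ ≤ (S / X ^ 60) ^ 2 := pow_le_pow_left₀ (hf x hxF) h2 2
        _ = S ^ 2 / X ^ 120 := by rw [div_pow, ← pow_mul]
    have hc : ((F.filter (fun x => ¬ S ≤ L * f x)).card : ℝ) ≤ (3 * X ^ 40) ^ 2 := by
      have h1 : ((F.filter (fun x => ¬ S ≤ L * f x)).card : ℝ) ≤ ((K + 1) ^ 2 : ℕ) :=
        Nat.cast_le.2 ((Finset.card_filter_le _ _).trans hF)
      refine h1.trans ?_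
      push_cast
      have : 1 ≤ X ^ 40 := one_le_pow₀ (by linarith)
      gcongr
      linarith
    calc _ ≤ (F.filter (fun x => ¬ S ≤ L * f x)).card • (S ^ 2 / X ^ 120) :=
          Finset.sum_le_card_nsmul _ _ _ hpt
      _ ≤ (3 * X ^ 40) ^ 2 * (S ^ 2 / X ^ 120) := by
          rw [nsmul_eq_mul]; gcongr
      _ = _ := by field_simp; norm_num
  have hsplit := Finset.sum_filter_add_sum_filter_not F (fun x => S ≤ L * f x)
    (fun x => f x ^ 2 / √x.den)
  have hlogX : Real.log X ≤ X := (Real.log_le_sub_one_of_pos hX0).trans (by linarith)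
  have hX39 : 1013760 ≤ X ^ 39 := le_trans (by norm_num) (pow_le_pow_left₀ (by norm_num) hX 39)
  have hloss : 56320 * Real.log X * (9 * S ^ 2 / X ^ 40) ≤ S ^ 2 / 2 := by
    rw [← mul_div_assoc, div_le_iff₀ (by positivity)]
    have h1 : 1013760 * Real.log X ≤ X ^ 40 := by
      calc 1013760 * Real.log X ≤ X ^ 39 * X := by gcongr
        _ = X ^ 40 := by ring
    nlinarith [mul_le_mul_of_nonneg_left h1 (sq_nonneg S)]
  rw [← hsplit, mul_add] at h
  have := mul_le_mul_of_nonneg_left hsmall (by positivity : 0 ≤ 56320 * Real.log X)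
  linarith

/-- Without a density increment, there are many large Fourier coefficients near rationals. -/
lemma NoSquareDiff.exists_large_fourier {A : Finset ℕ} (hA : NoSquareDiff A) {N n : ℕ} {X ν : ℝ}
    (hX : 5 / 3 ≤ X) (hAN : A ⊆ Finset.Icc 1 N) (hcard : A.card * X = N) (hN : X ^ 1000 ≤ N)
    (hν0 : 0 < ν) (hν1 : ν ≤ 1) (hν : ν * Real.log X ≤ 1 / 10 ^ 7) (hn : 0 < n)
    (hnN : n * X ^ 150 ≤ 2 * ν * N) (hD : SquareDiffBound n ((1 + ν / 20) / X * n)) :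
    ∃ B Q : ℝ, 0 < B ∧ B ≤ 4 * X ^ 60 ∧ 0 < Q ∧ Q ≤ 4 * X ^ 40 ∧ ∃ G : Finset ℚ,
      (∀ x ∈ G, (x.den : ℝ) ≤ Q ∧ 0 < x ∧ x ≤ 1) ∧
      (∃ γ : ℚ → ℝ, (∀ x ∈ G, γ x ∈ Set.Ioc (0 : ℝ) 1 ∧ |γ x - x| ≤ X ^ 20 / N) ∧
        A.card * (B * √Q) ≤ 10 ^ 10 * Real.log X ^ 3 * ∑ x ∈ G, ‖hatInd A (γ x)‖) ∧
      ∀ q : ℕ, 1 ≤ q → ((G.filter fun x => x.den = q).card : ℝ) ≤ ν * B ^ 2 := by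
  have hX0 : 0 < X := by linarith
  have hX1 : 1 ≤ X := by linarith
  have hℓ := half_le_log hX
  have hN0 : (0 : ℝ) < N := lt_of_lt_of_le (by positivity) hN
  have hS : (0 : ℝ) < A.card := by
    by_contra hcon
    have := Nat.cast_nonneg (α := ℝ) A.card
    nlinarith
  have hceil : ∀ k : ℕ, (⌈X ^ k⌉₊ : ℝ) ≤ 2 * X ^ k := by
    intro k
    have h1 : 1 ≤ X ^ k := one_le_pow₀ hX1
    have := Nat.ceil_lt_add_one (zero_le_one.trans h1)
    linarith
  have hceil_pos : ∀ k : ℕ, 1 ≤ ⌈X ^ k⌉₊ := fun k => Nat.ceil_pos.2 (by positivity)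
  have hceil' : ∀ k : ℕ, (⌈X ^ k⌉₊ : ℝ) ≤ X ^ (k + 2) := by
    intro k
    have h2 : 2 ≤ X ^ 2 := by nlinarith
    calc (⌈X ^ k⌉₊ : ℝ) ≤ 2 * X ^ k := hceil k
      _ ≤ X ^ 2 * X ^ k := by gcongr
      _ = X ^ (k + 2) := by ring
  set K := ⌈X ^ 40⌉₊
  set L := ⌈X ^ 60⌉₊
  obtain ⟨γ, hγ, hsum⟩ := hA.sq_card_le_sum_div_sqrt hX hAN hcard hN hν0 hν1 hν hn hnN hD
    (Nat.le_ceil _) (hceil 40)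
  set f : ℚ → ℝ := fun x => ‖hatInd A (γ x)‖
  have hlarge := sq_le_mul_sum_filter_large hX hS (hceil 40) (Nat.le_ceil (X ^ 60))
    ((Finset.card_filter_le _ _).trans (card_farey_le K)) f (fun x _ => norm_nonneg _) hsum
  set F := ((farey K).filter fun x => 0 < x ∧ x < 1).filter fun x => (A.card : ℝ) ≤ L * f x
    with hF_def
  have hF : ∀ x ∈ F, x.den ≤ K ∧ 0 < x ∧ x < 1 ∧ (A.card : ℝ) ≤ L * f x := by
    intro x hx
    obtain ⟨hx, hxS⟩ := Finset.mem_filter.1 hx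
    obtain ⟨hxK, hx0, hx1⟩ := Finset.mem_filter.1 hx
    exact ⟨(mem_farey.1 hxK).2.2, hx0, hx1, hxS⟩
  have hf0 : ∀ x ∈ F, 0 < f x := fun x hx =>
    pos_of_mul_pos_right (hS.trans_le (hF x hx).2.2.2) (Nat.cast_nonneg L)
  obtain ⟨i, hi, j, hj, G, hGF, hG, hGsum⟩ := exists_dyadic_scale F f hf0
    (fun x _ => norm_hatInd_le A (γ x)) (fun x hx => (hF x hx).2.2.2) (fun x hx => (hF x hx).1)
  have hpow : ∀ (m k i : ℕ), 1 ≤ m → (m : ℝ) ≤ 2 * X ^ k → i ≤ Nat.log 2 m →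
      (2 : ℝ) ^ (i + 1) ≤ 4 * X ^ k := by
    intro m k i hm hmX hi
    have h1 : 2 ^ i ≤ m := (Nat.pow_le_pow_right two_pos hi).trans
      (Nat.pow_log_le_self 2 (by omega))
    have h2 : (2 : ℝ) ^ i ≤ m := by exact_mod_cast h1
    rw [pow_succ]
    linarith
  refine ⟨2 ^ (i + 1), 2 ^ (j + 1), by positivity, hpow L 60 i (hceil_pos 60) (hceil 60) hi,
    by positivity, hpow K 40 j (hceil_pos 40) (hceil 40) hj, G, ?_, ⟨γ, ?_, ?_⟩, ?_⟩
  · intro x hx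
    have h := hF x (hGF hx)
    exact ⟨by exact_mod_cast (hG x hx).1, h.2.1, h.2.2.1.le⟩
  · intro x hx
    have h := hF x (hGF hx)
    exact hγ x h.2.1 h.2.2.1.le
  · have hlogs : ((Nat.log 2 K : ℝ) + 1) * (Nat.log 2 L + 1) ≤
        (86 * Real.log X) * (126 * Real.log X) := by
      have h1 := natLog_two_add_one_le hX (hceil_pos 40) (hceil' 40)
      have h2 := natLog_two_add_one_le hX (hceil_pos 60) (hceil' 60)
      norm_num at h1 h2
      exact mul_le_mul h1 h2 (by positivity) (by positivity)
    have hT : 0 ≤ ∑ x ∈ G, f x := Finset.sum_nonneg fun x _ => norm_nonneg _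
    refine le_of_mul_le_mul_left ?_ hS
    calc (A.card : ℝ) * (A.card * (2 ^ (i + 1) * √(2 ^ (j + 1))))
        = (A.card : ℝ) ^ 2 * (2 ^ (i + 1) * √(2 ^ (j + 1))) := by ring
      _ ≤ 112640 * Real.log X * (∑ x ∈ F, f x ^ 2 / √x.den) *
          (2 ^ (i + 1) * √(2 ^ (j + 1))) := by gcongr
      _ = 112640 * Real.log X * ((∑ x ∈ F, f x ^ 2 / √x.den) *
          (2 ^ (i + 1) * √(2 ^ (j + 1)))) := by ring
      _ ≤ 112640 * Real.log X * (4 * A.card * ((Nat.log 2 K + 1) * (Nat.log 2 L + 1)) *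
          ∑ x ∈ G, f x) := by gcongr
      _ ≤ 112640 * Real.log X * (4 * A.card * ((86 * Real.log X) * (126 * Real.log X)) *
          ∑ x ∈ G, f x) := by gcongr
      _ = 4882268160 * (A.card * Real.log X ^ 3 * ∑ x ∈ G, f x) := by ring
      _ ≤ 10 ^ 10 * (A.card * Real.log X ^ 3 * ∑ x ∈ G, f x) := by gcongr; norm_num
      _ = _ := by ring
  · intro q hq
    rcases (G.filter fun x => x.den = q).eq_empty_or_nonempty with h | ⟨x, hx⟩
    · rw [h]; simp; positivity
    · obtain ⟨hxG, rfl⟩ := Finset.mem_filter.1 hx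
      refine hA.card_filter_den_le hX hAN hcard (by exact_mod_cast hN0) hν0 hν1 hn hnN hD hq
        ((Nat.cast_le.2 (hF x (hGF hxG)).1).trans (hceil 40)) (by positivity) G γ ?_
      intro y hy
      have h := hF y (hGF hy)
      exact ⟨h.2.1, h.2.2.1, (hγ y h.2.1 h.2.2.1.le).2, (hG y hy).2⟩

theorem statement_10 :
    ∃ c > (0 : ℝ), ∃ C > (0 : ℝ), ∃ N₀ : ℕ, ∀ N : ℕ, N₀ ≤ N → ∀ ν : ℝ, 0 < ν →
      ∀ A : Finset ℕ, A ⊆ Finset.Icc 1 N → NoSquareDiff A →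
      ∀ α : ℝ, α = (A.card : ℝ) / N → (N : ℝ) ^ (-(1 / 3) : ℝ) ≤ α →
      -- (1) A is sparse
      (c * Real.log N ≤ Real.log (1 / α)) ∨
      -- (2) there is a density increment
      (∃ N' : ℕ, c * ν * α ^ C * N ≤ (N' : ℝ) ∧
        ∃ A' : Finset ℕ, A' ⊆ Finset.Icc 1 N' ∧ NoSquareDiff A' ∧
          (1 + ν / 20) * α ≤ (A'.card : ℝ) / N') ∨
      -- (3) many large Fourier coefficients close to rationals of different denominators
      (∃ B Q : ℝ, 0 < B ∧ B ≤ C * α ^ (-C) ∧ 0 < Q ∧ Q ≤ C * α ^ (-C) ∧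
        ∃ 𝓑 : Finset ℚ,
          (∀ x ∈ 𝓑, (x.den : ℝ) ≤ Q ∧ 0 < x ∧ x ≤ 1) ∧
          (∃ γ : ℚ → ℝ,
            (∀ x ∈ 𝓑, γ x ∈ Set.Ioc (0 : ℝ) 1 ∧
              |γ x - (x : ℝ) - round (γ x - (x : ℝ))| ≤ C * α ^ (-C) / N) ∧
            c * B * A.card * Real.sqrt Q / Real.log (1 / α) ^ (C : ℝ) ≤
              ∑ x ∈ 𝓑, ‖hatInd A (γ x)‖) ∧
          (∀ q : ℕ, 1 ≤ q → (q : ℝ) ≤ Q →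
            ((𝓑.filter fun x => x.den = q).card : ℝ) ≤ ν * B ^ 2)) := by
  refine ⟨1 / 2 ^ 250, by positivity, 200, by norm_num, 100, ?_⟩
  intro N hN100 ν hν0 A hAN hA α hα hαN
  rw [or_iff_not_imp_left]
  intro hsparse
  have hN0 : (0 : ℝ) < N := by
    have : 0 < N := by omega
    exact_mod_cast this
  have hα0 : 0 < α := (Real.rpow_pos_of_pos hN0 _).trans_le hαN
  obtain ⟨X, hX_def⟩ : ∃ X, X = 1 / α := ⟨_, rfl⟩
  have hα' : α = 1 / X := by rw [hX_def, one_div_one_div]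
  have hX0 : 0 < X := by rw [hX_def]; positivity
  have hcard : A.card * X = N := by
    have hA0 : (A.card : ℝ) ≠ 0 := by
      rintro h
      rw [h, zero_div] at hα
      exact hα0.ne' hα
    rw [hX_def, hα, one_div_div]
    field_simp
  have hX : 5 / 3 ≤ X := by
    have h1 : (2 : ℝ) * A.card ≤ N + 1 := by exact_mod_cast hA.two_mul_card_le hAN
    have h2 : (100 : ℝ) ≤ N := by exact_mod_cast hN100
    by_contra! hcon
    nlinarith
  have hX1 : 1 ≤ X := by linarith
  have hℓ := half_le_log hX
  have hℓ0 : 0 ≤ Real.log X := by linarith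
  have hℓX : Real.log X ≤ X := (Real.log_le_sub_one_of_pos hX0).trans (by linarith)
  have hXN : X ^ 1000 ≤ N := by
    rw [← hX_def, not_le] at hsparse
    rw [← Real.log_le_log_iff (by positivity) hN0, Real.log_pow]
    push_cast
    have : 0 ≤ Real.log N := Real.log_nonneg (by exact_mod_cast (by omega : 1 ≤ N))
    nlinarith
  have hpow : α ^ (200 : ℝ) = 1 / X ^ 200 := by
    rw [hα', show (200 : ℝ) = (200 : ℕ) by norm_num, Real.rpow_natCast, div_pow, one_pow]
  have hpow_neg : α ^ (-200 : ℝ) = X ^ 200 := by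
    rw [Real.rpow_neg hα0.le, hpow, one_div, inv_inv]
  have hlog : Real.log X ^ (200 : ℝ) = Real.log X ^ 200 := by
    rw [show (200 : ℝ) = (200 : ℕ) by norm_num, Real.rpow_natCast]
  rw [hpow, hpow_neg, ← hX_def, hlog]
  by_cases hν : 1 / 10 ^ 7 < ν * Real.log X
  · right
    refine ⟨2 * 10 ^ 7 * Real.log X, 1, by positivity, ?_, one_pos, ?_, {1}, ?_,
      ⟨fun _ => 1, ?_, ?_⟩, ?_⟩
    · have h1 : (10 : ℝ) ^ 7 ≤ X ^ 199 :=
        le_trans (by norm_num) (pow_le_pow_left₀ (by norm_num) hX 199)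
      calc 2 * 10 ^ 7 * Real.log X ≤ 200 * X ^ 199 * X := by gcongr; norm_num
        _ = 200 * X ^ 200 := by ring
    · have : 1 ≤ X ^ 200 := one_le_pow₀ hX1
      linarith
    · simp
    · simp; positivity
    · rw [Finset.sum_singleton, hatInd_one, Complex.norm_natCast, Real.sqrt_one,
        div_le_iff₀ (by positivity)]
      have h1 : (1 / 2 : ℝ) ^ 199 ≤ Real.log X ^ 199 := pow_le_pow_left₀ (by norm_num) hℓ 199
      have h2 : 1 / 2 ^ 250 * (2 * 10 ^ 7 : ℝ) ≤ Real.log X ^ 199 :=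
        le_trans (by norm_num) h1
      calc 1 / 2 ^ 250 * (2 * 10 ^ 7 * Real.log X) * A.card * 1
          = 1 / 2 ^ 250 * (2 * 10 ^ 7) * (A.card * Real.log X) := by ring
        _ ≤ Real.log X ^ 199 * (A.card * Real.log X) :=
          mul_le_mul_of_nonneg_right h2 (mul_nonneg (Nat.cast_nonneg _) hℓ0)
        _ = A.card * Real.log X ^ 200 := by ring
    · intro q _ _
      have h1 : (((({1} : Finset ℚ).filter fun x => x.den = q).card : ℕ) : ℝ) ≤ 1 := by
        exact_mod_cast (Finset.card_filter_le _ _).trans (Finset.card_singleton _).le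
      refine h1.trans ?_
      calc (1 : ℝ) ≤ 1 / 10 ^ 7 * (4 * 10 ^ 14 * (1 / 2)) := by norm_num
        _ ≤ ν * Real.log X * (4 * 10 ^ 14 * Real.log X) := by gcongr
        _ = ν * (2 * 10 ^ 7 * Real.log X) ^ 2 := by ring
  rw [not_lt] at hν
  have hν1 : ν ≤ 1 := by nlinarith
  have hlen : 1 / 2 ^ 250 * ν * (1 / X ^ 200) * N ≤ ν * N / X ^ 150 := by
    have h1 : X ^ 150 ≤ X ^ 200 := pow_le_pow_right₀ hX1 (by norm_num)
    calc 1 / 2 ^ 250 * ν * (1 / X ^ 200) * N = 1 / 2 ^ 250 * (ν * N / X ^ 200) := by ring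
      _ ≤ 1 * (ν * N / X ^ 150) := by gcongr; norm_num
      _ = _ := one_mul _
  by_cases hshort : ν * N / X ^ 150 < 1
  · left
    refine ⟨1, by push_cast; linarith, {1}, by simp, ?_, ?_⟩
    · intro a ha b hb n hn h
      rw [Finset.mem_singleton] at ha hb
      have := pow_pos hn 2
      omega
    · have h1 : 1 / X ≤ 3 / 5 := by
        rw [div_le_div_iff₀ hX0 (by norm_num)]; linarith
      simp only [Finset.card_singleton, Nat.cast_one, div_one]
      rw [hα']
      nlinarith [one_div_pos.2 hX0]
  rw [not_lt] at hshort
  set n := ⌈ν * N / X ^ 150⌉₊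
  have hn : 0 < n := Nat.ceil_pos.2 (by linarith)
  by_cases hD : SquareDiffBound n ((1 + ν / 20) / X * n)
  · right
    have hnN : n * X ^ 150 ≤ 2 * ν * N := by
      have h1 := Nat.ceil_lt_add_one (zero_le_one.trans hshort)
      have h2 : (n : ℝ) ≤ 2 * (ν * N / X ^ 150) := by linarith
      calc n * X ^ 150 ≤ 2 * (ν * N / X ^ 150) * X ^ 150 := by gcongr
        _ = 2 * ν * N := by field_simp
    obtain ⟨B, Q, hB0, hB, hQ0, hQ, G, hG, ⟨γ, hγ, hsum⟩, hGq⟩ :=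
      hA.exists_large_fourier hX hAN hcard hXN hν0 hν1 hν hn hnN hD
    have hle : ∀ k ≤ 200, 4 * X ^ k ≤ 200 * X ^ 200 := fun k hk =>
      mul_le_mul (by norm_num) (pow_le_pow_right₀ hX1 hk) (by positivity) (by norm_num)
    refine ⟨B, Q, hB0, hB.trans (hle 60 (by norm_num)), hQ0, hQ.trans (hle 40 (by norm_num)), G,
      hG, ⟨γ, ?_, ?_⟩, fun q hq _ => hGq q hq⟩
    · intro x hx
      refine ⟨(hγ x hx).1, ?_⟩
      calc |γ x - x - round (γ x - x)| ≤ |γ x - x - (0 : ℤ)| := round_le (γ x - x) 0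
        _ = |γ x - x| := by simp
        _ ≤ X ^ 20 / N := (hγ x hx).2
        _ ≤ 200 * X ^ 200 / N := by
          gcongr
          exact (le_mul_of_one_le_left (by positivity) (by norm_num)).trans (hle 20 (by norm_num))
    · rw [div_le_iff₀ (by positivity)]
      have hT : 0 ≤ ∑ x ∈ G, ‖hatInd A (γ x)‖ := Finset.sum_nonneg fun x _ => norm_nonneg _
      have h1 : (1 / 2 : ℝ) ^ 197 ≤ Real.log X ^ 197 := pow_le_pow_left₀ (by norm_num) hℓ 197
      have h2 : 1 / 2 ^ 250 * (10 ^ 10 : ℝ) ≤ Real.log X ^ 197 := le_trans (by norm_num) h1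
      calc 1 / 2 ^ 250 * B * A.card * √Q = 1 / 2 ^ 250 * (A.card * (B * √Q)) := by ring
        _ ≤ 1 / 2 ^ 250 * (10 ^ 10 * Real.log X ^ 3 * ∑ x ∈ G, ‖hatInd A (γ x)‖) := by gcongr
        _ = 1 / 2 ^ 250 * 10 ^ 10 * (Real.log X ^ 3 * ∑ x ∈ G, ‖hatInd A (γ x)‖) := by ring
        _ ≤ Real.log X ^ 197 * (Real.log X ^ 3 * ∑ x ∈ G, ‖hatInd A (γ x)‖) := by gcongr
        _ = (∑ x ∈ G, ‖hatInd A (γ x)‖) * Real.log X ^ 200 := by ring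
  · left
    unfold SquareDiffBound at hD
    push Not at hD
    obtain ⟨A', hA'n, hA', hA'card⟩ := hD
    refine ⟨n, hlen.trans (Nat.le_ceil _), A', hA'n, hA', ?_⟩
    rw [le_div_iff₀ (by exact_mod_cast hn), hα', mul_one_div]
    exact hA'card.le
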